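/- For fixed ρ > 0, limsup_{n→∞} ( n^{1/2} D_V ) ≤ ((1 − e^{−φ})/(5 g_V(ρ))) · ( √( 11 φ²/g_V(ρ)^{1/2} + 5 η_V(ρ)^{1/2} ) + 2φ/g_V(ρ)^{1/4} )², where η_V(ρ) := lim_{n→∞} η_V(n,ρ). -/

import Mathlib

open MeasureTheory ProbabilityTheory Filter Set Metric
open scoped ENNReal NNReal BigOperators Topology Classical

noncomputable section

/-- Side length `n^(1/d)` of the cube `C_n` of volume `n` in dimension `d`. -/
def sideLen (d n : ℕ) : ℝ := (n : ℝ) ^ ((d : ℝ)⁻¹)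

/-- The cube `C_n = [0, L)^d`. -/
def box (d : ℕ) (L : ℝ) : Set (Fin d → ℝ) := Set.univ.pi fun _ => Set.Ico (0 : ℝ) L

/-- The Euclidean toroidal distance on the cube `[0, L)^d`. -/
def torDist {d : ℕ} (L : ℝ) (x y : Fin d → ℝ) : ℝ :=
  Real.sqrt (∑ i, (⨅ k : ℤ, |x i - y i - k * L|) ^ 2)

/-- The toroidal ball `B_r(x) = {y ∈ C_n : D(x,y) ≤ r}`. -/
def torBall {d : ℕ} (L : ℝ) (x : Fin d → ℝ) (r : ℝ) : Set (Fin d → ℝ) :=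
  {y ∈ box d L | torDist L x y ≤ r}

/-- Addition (translation) in the torus `[0, L)^d`. -/
def torAdd {d : ℕ} (L : ℝ) (y x : Fin d → ℝ) : Fin d → ℝ :=
  fun i => L * Int.fract ((y i + x i) / L)

/-- The uniform probability measure on the cube `[0, L)^d`. -/
def uniformBox (d : ℕ) (L : ℝ) : Measure (Fin d → ℝ) :=
  ((L.toNNReal ^ d)⁻¹ : ℝ≥0) • volume.restrict (box d L)

/-- The joint law of `n` independent points uniformly distributed on the cube `C_n`
of volume `n`; a point configuration is `ω : Fin n → (Fin d → ℝ)`, with `U_i = ω i`. -/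
def binppLaw (d n : ℕ) : Measure (Fin n → Fin d → ℝ) :=
  Measure.pi fun _ => uniformBox d (sideLen d n)

/-- The total covered volume `V` of the union of toroidal balls of radius `ρ`
centered at the `n` points. -/
def coveredVol (d n : ℕ) (ρ : ℝ) (ω : Fin n → Fin d → ℝ) : ℝ :=
  (volume (⋃ i, torBall (sideLen d n) (ω i) ρ)).toReal

/-- The number `S` of isolated points: indices `i` with `𝒰_n ∩ B_ρ(U_i) = {U_i}`. -/
def isolCount (d n : ℕ) (ρ : ℝ) (ω : Fin n → Fin d → ℝ) : ℝ :=
  ∑ i, if Set.range ω ∩ torBall (sideLen d n) (ω i) ρ = {ω i} then 1 else 0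

/-- `π_d`: the volume of the unit ball in `ℝ^d`. -/
def unitBallVol (d : ℕ) : ℝ :=
  (volume (Metric.closedBall (0 : EuclideanSpace ℝ (Fin d)) 1)).toReal

/-- `φ = π_d ρ^d`. -/
def phi (d : ℕ) (ρ : ℝ) : ℝ := unitBallVol d * ρ ^ d

/-- The standard normal cumulative distribution function. -/
def stdGaussCDF (t : ℝ) : ℝ := (gaussianReal 0 1 (Set.Iic t)).toReal

/-- The Kolmogorov distance `D_X` between the law of the standardized version of `X`
and the standard normal. -/
def kolDist {Ω : Type*} [MeasurableSpace Ω] (P : Measure Ω) (X : Ω → ℝ) : ℝ :=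
  ⨆ t : ℝ,
    |(P {ω | (X ω - ∫ x, X x ∂P) / Real.sqrt (variance X P) ≤ t}).toReal - stdGaussCDF t|

/-- A fixed unit vector in `ℝ^d` (junk value `0` if `d = 0`). -/
def unitVec (d : ℕ) : EuclideanSpace ℝ (Fin d) :=
  if h : 0 < d then EuclideanSpace.single (⟨0, h⟩ : Fin d) 1 else 0

/-- `ω_d(r)`: the volume of the union of two unit balls in `ℝ^d` whose centers are
at distance `r` apart. -/
def omegaVol (d : ℕ) (r : ℝ) : ℝ :=
  (volume (Metric.closedBall (0 : EuclideanSpace ℝ (Fin d)) 1 ∪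
      Metric.closedBall (r • unitVec d) 1)).toReal

/-- The integral `J_{r,d}(ρ) = d π_d ∫_0^r exp(-ρ^d ω_d(t)) t^{d-1} dt`. -/
def Jint (r : ℝ) (d : ℕ) (ρ : ℝ) : ℝ :=
  d * unitBallVol d * ∫ t in (0:ℝ)..r, Real.exp (-(ρ ^ d * omegaVol d t)) * t ^ (d - 1)

/-- The limiting variance density `g_V(ρ)`. -/
def gV (d : ℕ) (ρ : ℝ) : ℝ :=
  ρ ^ d * Jint 2 d ρ - (2 ^ d * phi d ρ + phi d ρ ^ 2) * Real.exp (-(2 * phi d ρ))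

/-- The limiting variance density `g_S(ρ)`. -/
def gS (d : ℕ) (ρ : ℝ) : ℝ :=
  Real.exp (-phi d ρ) - (1 + (2 ^ d - 2) * phi d ρ + phi d ρ ^ 2) * Real.exp (-(2 * phi d ρ))
    + ρ ^ d * (Jint 2 d ρ - Jint 1 d ρ)

/-- `κ_d`: the maximum number of closed unit balls in `ℝ^d` that can be packed so that
they all intersect a closed unit ball at the origin but are pairwise disjoint. -/
def kappa (d : ℕ) : ℕ :=
  sSup {k : ℕ | ∃ c : Fin k → EuclideanSpace ℝ (Fin d),
    (∀ i, (Metric.closedBall (c i) 1 ∩ Metric.closedBall 0 1).Nonempty) ∧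
    Pairwise fun i j => Disjoint (Metric.closedBall (c i) 1) (Metric.closedBall (c j) 1)}

/-- `η_V(n, ρ)`. -/
def etaV (d n : ℕ) (ρ : ℝ) : ℝ :=
  2 * phi d ρ ^ 2 * ((3 ^ d + 1) * phi d ρ + 1) ^ 2 *
      (1 + (2 ^ d + 1) * 6 ^ d * phi d ρ +
        ((2 * n - 6 ^ d * phi d ρ) / (n - 6 ^ d * phi d ρ)) * 6 ^ (2 * d) * phi d ρ ^ 2) +
    2 * phi d ρ ^ 4 *
      (3 * (4 ^ d + 2 ^ d) * phi d ρ +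
        3 * 4 ^ d * phi d ρ ^ 2 * ((2 * n - 3 * 2 ^ d * phi d ρ) / (n - 3 * 2 ^ d * phi d ρ)) +
        4 + 2 / n)

/-- `η_S(n, ρ)`. -/
def etaS (d n : ℕ) (ρ : ℝ) : ℝ :=
  2 * (1 + 2 * (kappa d : ℝ)) ^ 2 *
      (1 + (2 ^ d + 1) * 3 ^ d * phi d ρ +
        ((2 * n - 3 ^ d * phi d ρ) / (n - 3 ^ d * phi d ρ)) * 9 ^ d * phi d ρ ^ 2) +
    (((1 : ℝ) + kappa d) ^ 2 / 2) *
      ((2 ^ d + 2 * 3 ^ d + 3) * phi d ρ +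
        (2 ^ (d + 1) + 1) *
          ((2 * n - (2 ^ (d + 1) + 1) * phi d ρ) / (n - (2 ^ (d + 1) + 1) * phi d ρ)) *
          phi d ρ ^ 2 +
        (4 * n - 2) / (n - 1))

section

def gp (x : ℝ) : ℝ := gaussianPDFReal 0 1 x

lemma gp_eq (x : ℝ) : gp x = (√(2 * Real.pi))⁻¹ * Real.exp (-x ^ 2 / 2) := by
  simp [gp, gaussianPDFReal]

lemma gp_pos (x : ℝ) : 0 < gp x := gaussianPDFReal_pos 0 1 x one_ne_zero

lemma gp_int : Integrable gp := integrable_gaussianPDFReal 0 1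

lemma gp_integral : ∫ x, gp x = 1 := integral_gaussianPDFReal_eq_one 0 one_ne_zero

lemma gp_deriv (x : ℝ) : HasDerivAt gp (-x * gp x) x := by
  have h1 : HasDerivAt (fun x : ℝ => -x ^ 2 / 2) (-x) x := by
    have := (((hasDerivAt_pow 2 x).neg).div_const 2)
    refine this.congr_deriv ?_
    simp
    try ring
  have h2 := (h1.exp).const_mul ((√(2 * Real.pi))⁻¹)
  have : gp = fun x => (√(2 * Real.pi))⁻¹ * Real.exp (-x ^ 2 / 2) := funext gp_eq
  rw [this]
  refine h2.congr_deriv ?_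
  ring

lemma gp_cont : Continuous gp := by
  have : gp = fun x => (√(2 * Real.pi))⁻¹ * Real.exp (-x ^ 2 / 2) := funext gp_eq
  rw [this]; fun_prop

lemma gp_even (x : ℝ) : gp (-x) = gp x := by simp [gp_eq]

lemma gp_le (x : ℝ) : gp x ≤ 0.4 := by
  rw [gp_eq]
  have h1 : Real.exp (-x ^ 2 / 2) ≤ 1 := by
    rw [Real.exp_le_one_iff]; nlinarith [sq_nonneg x]
  have h2 : (2.5 : ℝ) ≤ √(2 * Real.pi) := by
    apply Real.le_sqrt_of_sq_le
    nlinarith [Real.pi_gt_d4]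
  have h3 : (√(2 * Real.pi))⁻¹ ≤ 0.4 := by
    rw [inv_le_comm₀ (by linarith) (by norm_num)]
    norm_num at h2 ⊢; linarith
  have h4 := Real.exp_pos (-x ^ 2 / 2)
  have h5 : 0 < (√(2 * Real.pi))⁻¹ := by positivity
  nlinarith

lemma gp_ge {x : ℝ} (hx : |x| ≤ 1) : 0.18 ≤ gp x := by
  rw [gp_eq]
  have h2 : √(2 * Real.pi) ≤ 2.6 := by
    apply Real.sqrt_le_left (by norm_num) |>.mpr
    nlinarith [Real.pi_lt_d4]
  have h4 : 0 < √(2 * Real.pi) := by positivity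
  have h3 : (1 : ℝ) / 2.6 ≤ (√(2 * Real.pi))⁻¹ := by
    rw [one_div]
    exact inv_anti₀ h4 h2
  have h1 : (1 : ℝ) / 2 ≤ Real.exp (-x ^ 2 / 2) := by
    have := Real.add_one_le_exp (-x ^ 2 / 2)
    have h5 : x ^ 2 ≤ 1 := (sq_le_one_iff_abs_le_one x).mpr hx
    linarith
  calc (0.18 : ℝ) ≤ (1 : ℝ) / 2.6 * (1 / 2) := by norm_num
    _ ≤ _ := by gcongr

lemma gp_tendsto_top : Tendsto gp atTop (𝓝 0) := by
  have : gp = fun x => (√(2 * Real.pi))⁻¹ * Real.exp (-x ^ 2 / 2) := funext gp_eq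
  rw [this, ← mul_zero ((√(2 * Real.pi))⁻¹)]
  refine Tendsto.const_mul _ (Real.tendsto_exp_atBot.comp ?_)
  have h : Tendsto (fun x : ℝ => x ^ 2 / 2) atTop atTop :=
    (tendsto_pow_atTop (by norm_num)).atTop_div_const (by norm_num)
  have := tendsto_neg_atTop_atBot.comp h
  refine this.congr fun x => ?_
  simp; ring

lemma xgp_int : Integrable (fun x => x * gp x) := by
  have h := integrable_mul_exp_neg_mul_sq (b := 1 / 2) (by norm_num)
  have := h.const_mul ((√(2 * Real.pi))⁻¹)
  refine this.congr (ae_of_all _ fun x => ?_)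
  simp only [gp_eq]
  rw [show -x ^ 2 / 2 = -(1 / 2) * x ^ 2 by ring]
  ring

/-- Mills ratio bound. -/
lemma mills (w : ℝ) : w * ∫ x in Ioi w, gp x ≤ gp w := by
  have h1 : ∫ x in Ioi w, x * gp x = gp w := by
    have := integral_Ioi_of_hasDerivAt_of_tendsto' (f := fun x => -gp x) (f' := fun x => x * gp x)
      (a := w) (m := 0) (fun x _ => ((gp_deriv x).fun_neg).congr_deriv (by ring)) xgp_int.integrableOn
      (by simpa using gp_tendsto_top.neg)
    simpa using this
  rw [← h1, ← integral_const_mul]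
  refine setIntegral_mono_on (gp_int.const_mul w).integrableOn xgp_int.integrableOn
    measurableSet_Ioi fun x hx => ?_
  exact mul_le_mul_of_nonneg_right (le_of_lt hx) (gp_pos x).le

lemma mills' (w : ℝ) : -w * ∫ x in Iic w, gp x ≤ gp w := by
  have h := mills (-w)
  rw [gp_even] at h
  have : ∫ x in Ioi (-w), gp x = ∫ x in Iic w, gp x := by
    rw [← integral_comp_neg_Iic]
    simp [gp_even]
  rwa [this] at h

lemma setint_hasDeriv {G : ℝ → ℝ} (hc : Continuous G) (hi : Integrable G) (w : ℝ) :
    HasDerivAt (fun w => ∫ x in Iic w, G x) (G w) w := by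
  have h : (fun w => ∫ x in Iic w, G x) = fun w => (∫ x in Iic 0, G x) + ∫ x in (0:ℝ)..w, G x := by
    ext w
    rw [← intervalIntegral.integral_Iic_sub_Iic hi.integrableOn hi.integrableOn]; ring
  rw [h]
  exact (intervalIntegral.integral_hasDerivAt_right (hi.intervalIntegrable)
    (hc.stronglyMeasurableAtFilter _ _) hc.continuousAt).const_add _

lemma integral_gauss (h : ℝ → ℝ) : ∫ x, h x ∂(gaussianReal 0 1) = ∫ x, h x * gp x := by
  rw [integral_gaussianReal_eq_integral_smul one_ne_zero]
  simp [gp, mul_comm]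

lemma stein_exists (h : ℝ → ℝ) (hc : Continuous h) (h0 : ∀ x, 0 ≤ h x) (h1 : ∀ x, h x ≤ 1)
    (hm : Antitone h) : ∃ f f' : ℝ → ℝ, (∀ w, HasDerivAt f (f' w) w) ∧
      (∀ w, f' w = w * f w + h w - ∫ x, h x ∂(gaussianReal 0 1)) ∧
      (∀ w, |f w| ≤ 1.4) ∧ ∀ w, |f' w| ≤ 1 := by
  have hb : ∀ x, ‖h x‖ ≤ 1 := fun x => by rw [Real.norm_eq_abs, abs_of_nonneg (h0 x)]; exact h1 x
  have hgi : Integrable (fun x => h x * gp x) :=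
    gp_int.bdd_mul hc.aestronglyMeasurable (ae_of_all _ hb)
  rw [integral_gauss]
  set N := ∫ x, h x * gp x with hN
  have hGi : Integrable (fun x => (h x - N) * gp x) := by
    have := hgi.sub (gp_int.const_mul N)
    refine this.congr (ae_of_all _ fun x => ?_)
    simp; ring
  have hGc : Continuous (fun x => (h x - N) * gp x) := (hc.sub continuous_const).mul gp_cont
  let f : ℝ → ℝ := fun w => (∫ x in Iic w, (h x - N) * gp x) / gp w
  have key : ∀ w, ∃ a b P, 0 ≤ P ∧ P ≤ 1 ∧ w * (1 - P) ≤ gp w ∧ -w * P ≤ gp w ∧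
      h w * P ≤ a ∧ a ≤ P ∧ 0 ≤ b ∧ b ≤ h w * (1 - P) ∧ N = a + b ∧
      f w = (a * (1 - P) - b * P) / gp w := by
    intro w
    have hsp : (∫ x in Iic w, gp x) + ∫ x in Ioi w, gp x = 1 := by
      rw [← gp_integral, ← integral_add_compl (measurableSet_Iic (a := w)) gp_int, compl_Iic]
    have hsN : (∫ x in Iic w, h x * gp x) + ∫ x in Ioi w, h x * gp x = N := by
      rw [hN, ← integral_add_compl (measurableSet_Iic (a := w)) hgi, compl_Iic]
    have e1 : 1 - ∫ x in Iic w, gp x = ∫ x in Ioi w, gp x := by linarith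
    refine ⟨∫ x in Iic w, h x * gp x, ∫ x in Ioi w, h x * gp x, ∫ x in Iic w, gp x,
      ?_, ?_, ?_, mills' w, ?_, ?_, ?_, ?_, hsN.symm, ?_⟩
    · exact integral_nonneg fun x => (gp_pos x).le
    · have : 0 ≤ ∫ x in Ioi w, gp x := integral_nonneg fun x => (gp_pos x).le
      linarith
    · rw [e1]; exact mills w
    · rw [← integral_const_mul]
      refine setIntegral_mono_on (gp_int.const_mul _).integrableOn hgi.integrableOn
        measurableSet_Iic fun x hx => ?_
      exact mul_le_mul_of_nonneg_right (hm hx) (gp_pos x).le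
    · refine integral_mono hgi.integrableOn gp_int.integrableOn fun x => ?_
      have := mul_le_mul_of_nonneg_right (h1 x) (gp_pos x).le
      simpa using this
    · exact integral_nonneg fun x => mul_nonneg (h0 x) (gp_pos x).le
    · rw [e1, ← integral_const_mul]
      refine setIntegral_mono_on hgi.integrableOn (gp_int.const_mul _).integrableOn
        measurableSet_Ioi fun x hx => ?_
      exact mul_le_mul_of_nonneg_right (hm (le_of_lt hx)) (gp_pos x).le
    · have : ∫ x in Iic w, (h x - N) * gp x =
          (∫ x in Iic w, h x * gp x) - N * ∫ x in Iic w, gp x := by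
        rw [← integral_const_mul, ← integral_sub hgi.integrableOn (gp_int.const_mul _).integrableOn]
        congr 1; ext x; ring
      simp only [f]
      rw [this, ← hsN]
      ring
  refine ⟨f, fun w => w * f w + h w - N, ?_, fun w => rfl, ?_, ?_⟩
  · intro w
    have h1 := (setint_hasDeriv hGc hGi w).div (gp_deriv w) (gp_pos w).ne'
    refine h1.congr_deriv ?_
    have := (gp_pos w).ne'
    simp only [f]
    field_simp
    ring
  · intro w
    obtain ⟨a, b, P, hP0, hP1, hM, hM', ha, ha', hb, hb', -, hf⟩ := key w
    have hg := gp_pos w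
    have hnum0 : 0 ≤ a * (1 - P) - b * P := by nlinarith
    rw [hf, abs_of_nonneg (div_nonneg hnum0 hg.le), div_le_iff₀ hg]
    have hnum1 : a * (1 - P) - b * P ≤ P * (1 - P) := by nlinarith
    refine hnum1.trans ?_
    by_cases hw : |w| ≤ 1
    · have := gp_ge hw
      nlinarith [sq_nonneg (P - 1 / 2)]
    · rw [not_le, lt_abs] at hw
      rcases hw with hw | hw
      · have : 1 * (1 - P) ≤ w * (1 - P) := by gcongr
        nlinarith
      · have : 1 * P ≤ -w * P := by gcongr
        nlinarith
  · intro w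
    obtain ⟨a, b, P, hP0, hP1, hM, hM', ha, ha', hb, hb', hNab, hf⟩ := key w
    have hg := gp_pos w
    have hh0 := h0 w
    have hh1 := h1 w
    set m := w * (1 - P) / gp w with hm
    set m' := -w * P / gp w with hm'
    have hm1 : m ≤ 1 := by rw [hm, div_le_one hg]; exact hM
    have hm1' : m' ≤ 1 := by rw [hm', div_le_one hg]; exact hM'
    have e : w * f w + h w - N = a * (m - 1) + b * (m' - 1) + h w := by
      rw [hf, hNab, hm, hm']; field_simp; ring
    have rel : m * P = -(m' * (1 - P)) := by rw [hm, hm']; field_simp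
    show |w * f w + h w - N| ≤ 1
    rw [e, abs_le]
    constructor
    · have t1 : P * (m - 1) ≤ a * (m - 1) := mul_le_mul_of_nonpos_right ha' (by linarith)
      have t2 : h w * (1 - P) * (m' - 1) ≤ b * (m' - 1) :=
        mul_le_mul_of_nonpos_right hb' (by linarith)
      have t3 : m' * (1 - P) ≤ 1 * (1 - P) := by gcongr
      nlinarith
    · have t1 : a * (m - 1) ≤ h w * P * (m - 1) := mul_le_mul_of_nonpos_right ha (by linarith)
      have t2 : b * (m' - 1) ≤ 0 := mul_nonpos_of_nonneg_of_nonpos hb (by linarith)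
      have t3 : m * P ≤ 1 * P := by gcongr
      nlinarith

end

section

lemma stdGaussCDF_eq (t : ℝ) : stdGaussCDF t = ∫ x in Iic t, gp x := by
  rw [stdGaussCDF, gaussianReal_apply_eq_integral 0 one_ne_zero, ENNReal.toReal_ofReal]
  · rfl
  · exact integral_nonneg fun x => (gp_pos x).le

lemma stdGaussCDF_lip {a b : ℝ} (h : a ≤ b) : stdGaussCDF b - stdGaussCDF a ≤ 0.4 * (b - a) := by
  rw [stdGaussCDF_eq, stdGaussCDF_eq,
    intervalIntegral.integral_Iic_sub_Iic gp_int.integrableOn gp_int.integrableOn]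
  calc ∫ x in a..b, gp x ≤ ∫ x in a..b, (0.4 : ℝ) :=
        intervalIntegral.integral_mono_on h gp_int.intervalIntegrable
          intervalIntegrable_const fun x _ => gp_le x
    _ = _ := by simp; ring

def ramp (z α w : ℝ) : ℝ := max 0 (min 1 ((z + α - w) / α))

lemma ramp_cont (z α : ℝ) : Continuous (ramp z α) := by
  unfold ramp; fun_prop

lemma ramp_nonneg (z α w : ℝ) : 0 ≤ ramp z α w := le_max_left _ _

lemma ramp_le (z α w : ℝ) : ramp z α w ≤ 1 := max_le zero_le_one (min_le_left _ _)

lemma ramp_anti (z : ℝ) {α : ℝ} (hα : 0 < α) : Antitone (ramp z α) := by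
  intro x y hxy
  unfold ramp
  gcongr

lemma ramp_ge_ind (z : ℝ) {α : ℝ} (hα : 0 < α) {w : ℝ} (h : w ≤ z) : ramp z α w = 1 := by
  unfold ramp
  have : 1 ≤ (z + α - w) / α := by rw [le_div_iff₀ hα]; linarith
  rw [min_eq_left this]; simp

lemma ramp_zero (z : ℝ) {α : ℝ} (hα : 0 < α) {w : ℝ} (h : z + α ≤ w) : ramp z α w = 0 := by
  unfold ramp
  have : (z + α - w) / α ≤ 0 := div_nonpos_of_nonpos_of_nonneg (by linarith) hα.le
  apply max_eq_left
  exact (min_le_right _ _).trans this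

lemma ramp_eq_int (z : ℝ) {α : ℝ} (hα : 0 < α) (w : ℝ) :
    ramp z α w = α⁻¹ * ∫ u in Ioc 0 α, (if w ≤ z + u then (1 : ℝ) else 0) := by
  have e : (fun u : ℝ => if w ≤ z + u then (1 : ℝ) else 0) =
      (Ici (w - z)).indicator (fun _ => (1 : ℝ)) := by
    ext u
    simp only [indicator, mem_Ici]
    congr 1
    simp [sub_le_iff_le_add, add_comm]
  rw [e, integral_indicator measurableSet_Ici, Measure.restrict_restrict measurableSet_Ici]
  simp only [integral_const, smul_eq_mul, mul_one]
  rw [measureReal_restrict_apply_univ]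
  rcases le_or_gt w z with h1 | h1
  · rw [ramp_ge_ind z hα h1]
    have : Ici (w - z) ∩ Ioc 0 α = Ioc 0 α := by
      ext u; simp only [mem_inter_iff, mem_Ici, mem_Ioc]; constructor
      · exact fun h => h.2
      · intro h; exact ⟨by linarith [h.1], h⟩
    rw [this]; simp [hα.le]; field_simp
  · have : Ici (w - z) ∩ Ioc 0 α = Icc (w - z) α := by
      ext u; simp only [mem_inter_iff, mem_Ici, mem_Ioc, mem_Icc]; constructor
      · exact fun h => ⟨h.1, h.2.2⟩
      · intro h; exact ⟨h.1, by linarith [h.1], h.2⟩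
    rw [this]
    rcases le_or_gt w (z + α) with h2 | h2
    · rw [Real.volume_real_Icc_of_le (by linarith)]
      unfold ramp
      have t1 : (z + α - w) / α ≤ 1 := by rw [div_le_one hα]; linarith
      have t2 : 0 ≤ (z + α - w) / α := div_nonneg (by linarith) hα.le
      rw [min_eq_right t1, max_eq_right t2]
      field_simp; ring
    · rw [Icc_eq_empty (by linarith), ramp_zero z hα h2.le]; simp

lemma ramp_integral {Ω : Type*} [MeasurableSpace Ω] (Q : Measure Ω) [IsProbabilityMeasure Q]
    {W : Ω → ℝ} (hW : Measurable W) (z : ℝ) {α : ℝ} (hα : 0 < α) :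
    ∫ ω, ramp z α (W ω) ∂Q = α⁻¹ * ∫ u in (0:ℝ)..α, Q.real {ω | W ω ≤ z + u} := by
  simp_rw [ramp_eq_int z hα]
  rw [integral_const_mul, intervalIntegral.integral_of_le hα.le, integral_integral_swap]
  · congr 1
    congr 1
    ext u
    have : (fun ω => if W ω ≤ z + u then (1 : ℝ) else 0) =
        {ω | W ω ≤ z + u}.indicator (fun _ => (1 : ℝ)) := by
      ext ω; simp [indicator]
    rw [this, integral_indicator (measurableSet_le hW measurable_const)]
    simp
  · refine Integrable.of_bound (C := 1) ?_ (ae_of_all _ ?_)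
    · refine Measurable.aestronglyMeasurable ?_
      refine Measurable.ite ?_ measurable_const measurable_const
      exact measurableSet_le (hW.comp measurable_fst) (measurable_const.add measurable_snd)
    · rintro ⟨ω, u⟩
      simp only [Function.uncurry]
      split_ifs <;> simp

lemma cdf_intervalIntegrable {Ω : Type*} [MeasurableSpace Ω] (Q : Measure Ω)
    [IsProbabilityMeasure Q] (W : Ω → ℝ) (a b z : ℝ) :
    IntervalIntegrable (fun u => Q.real {ω | W ω ≤ z + u}) volume a b := by
  apply Monotone.intervalIntegrable
  intro x y hxy
  exact measureReal_mono (fun ω (h : W ω ≤ z + x) => show W ω ≤ z + y from h.trans (by linarith))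

lemma stein_rem {h f f' : ℝ → ℝ} {N δ w g : ℝ} (hm : Antitone h)
    (hf : ∀ w, HasDerivAt f (f' w) w) (he : ∀ w, f' w = w * f w + h w - N)
    (hb : ∀ w, |f w| ≤ 1.4) (hb' : ∀ w, |f' w| ≤ 1) (hg : 0 ≤ g) (hgδ : g ≤ δ) :
    |f w - f (w - g) - g * f' w| ≤ δ ^ 2 / 2 * (1.4 + |w|) + δ * (h (w - δ) - h w) := by
  set c1 := 1.4 + |w|
  set c2 := h (w - δ) - h w
  have hc2 : 0 ≤ c2 := sub_nonneg.mpr (hm (by linarith))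
  have hc1 : 0 ≤ c1 := by positivity
  have hlip : ∀ x y, |f y - f x| ≤ 1 * |y - x| := fun x y =>
    convex_univ.norm_image_sub_le_of_norm_hasDerivWithin_le (f := f) (f' := f')
      (fun x _ => (hf x).hasDerivWithinAt) (fun x _ => hb' x) (mem_univ x) (mem_univ y)
  have hd : ∀ t, HasDerivAt (fun t => f w - f (w - t) - t * f' w) (f' (w - t) - f' w) t := by
    intro t
    have h1 : HasDerivAt (fun t => f (w - t)) (-(f' (w - t))) t := by
      have := (hf (w - t)).comp_const_sub w t
      exact this
    have h2 := (h1.const_sub (f w)).sub ((hasDerivAt_id t).mul_const (f' w))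
    refine h2.congr_deriv ?_
    ring
  have key := image_norm_le_of_norm_deriv_right_le_deriv_boundary (a := 0) (b := g)
    (f := fun t => f w - f (w - t) - t * f' w) (f' := fun t => f' (w - t) - f' w)
    (B := fun t => c1 * t ^ 2 / 2 + c2 * t) (B' := fun t => c1 * t + c2)
    (fun t _ => (hd t).continuousAt.continuousWithinAt) (fun t _ => (hd t).hasDerivWithinAt)
    (by simp) (fun t => by
      have := (((hasDerivAt_pow 2 t).const_mul c1).div_const 2).add
        ((hasDerivAt_id t).const_mul c2)
      refine this.congr_deriv ?_
      simp; ring) (fun t ht => by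
      have ht0 := ht.1
      have htg := ht.2
      rw [Real.norm_eq_abs, he, he]
      have e : (w - t) * f (w - t) + h (w - t) - N - (w * f w + h w - N) =
        w * (f (w - t) - f w) + (-(t * f (w - t))) + (h (w - t) - h w) := by ring
      rw [e]
      have a1 : |w * (f (w - t) - f w)| ≤ |w| * t := by
        rw [abs_mul]
        have := hlip w (w - t)
        have e2 : |w - t - w| = t := by rw [show w - t - w = -t by ring, abs_neg, abs_of_nonneg ht0]
        rw [e2, one_mul] at this
        gcongr
      have a2 : |-(t * f (w - t))| ≤ t * 1.4 := by
        rw [abs_neg, abs_mul, abs_of_nonneg ht0]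
        gcongr
        exact hb _
      have a3 : |h (w - t) - h w| ≤ c2 := by
        rw [abs_of_nonneg (sub_nonneg.mpr (hm (by linarith)))]
        have : h (w - t) ≤ h (w - δ) := hm (by linarith)
        simp only [c2]; linarith
      have := abs_add_three (w * (f (w - t) - f w)) (-(t * f (w - t))) (h (w - t) - h w)
      simp only [c1]
      linarith)
  have := key (right_mem_Icc.mpr hg)
  rw [Real.norm_eq_abs] at this
  refine this.trans ?_
  have : g ^ 2 ≤ δ ^ 2 := by gcongr
  nlinarith

end

section

lemma stein_alg {A e D : ℝ} (hA : 0 < A) (he : 0 ≤ e)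
    (h : ∀ α, 0 < α → D ≤ 0.2 * α + (e + A * (1.6 + 2 * D / α))) :
    D ≤ (√(0.4 * A) + √(2 * A + e)) ^ 2 := by
  set x := √(0.4 * A) with hx
  set y := √(2 * A + e) with hy
  have hx2 : x ^ 2 = 0.4 * A := Real.sq_sqrt (by positivity)
  have hy2 : y ^ 2 = 2 * A + e := Real.sq_sqrt (by positivity)
  have hx0 : 0 < x := Real.sqrt_pos.mpr (by positivity)
  have hy0 : 0 < y := Real.sqrt_pos.mpr (by positivity)
  have hα : 0 < 5 * x * (x + y) := by positivity
  have := h _ hα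
  have e1 : A * (2 * D / (5 * x * (x + y))) = x * D / (x + y) := by
    have : A = 2.5 * x ^ 2 := by rw [hx2]; ring
    rw [this]; field_simp; ring
  have e2 : D ≤ x * (x + y) + (y ^ 2 - x ^ 2) + x * D / (x + y) := by
    rw [hx2, hy2]
    have : x * (x + y) = 0.2 * (5 * x * (x + y)) := by ring
    linarith
  have e3 : D * (x + y) ≤ (x * (x + y) + (y ^ 2 - x ^ 2)) * (x + y) + x * D := by
    have := mul_le_mul_of_nonneg_right e2 (by positivity : 0 ≤ x + y)
    rw [add_mul, div_mul_cancel₀ _ (by positivity)] at this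
    exact this
  have e4 : D * y ≤ (x + y) ^ 2 * y := by nlinarith
  exact le_of_mul_le_mul_right e4 hy0

/-- Abstract Kolmogorov bound from a one-sided bounded Stein coupling. -/
theorem stein_kol {Ω : Type*} [MeasurableSpace Ω] (Q : Measure Ω) [IsProbabilityMeasure Q]
    {W : Ω → ℝ} (hW : Measurable W) {C : ℝ} (hWC : ∀ ω, |W ω| ≤ C) (hW1 : ∫ ω, |W ω| ∂Q ≤ 1)
    {ι : Type*} [Fintype ι] {a g : ι → Ω → ℝ} (ham : ∀ j, Measurable (a j))
    (hgm : ∀ j, Measurable (g j)) {δ A0 e : ℝ} (hg0 : ∀ j ω, 0 ≤ g j ω) (hgδ : ∀ j ω, g j ω ≤ δ)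
    (hδ : 0 < δ) (hA0 : 0 < A0) (ha : ∀ ω, ∑ j, |a j ω| ≤ A0)
    (hT : ∫ ω, |1 - ∑ j, a j ω * g j ω| ∂Q ≤ e)
    (hid : ∀ f : ℝ → ℝ, Continuous f → (∀ x, |f x| ≤ 1.4) →
      ∫ ω, W ω * f (W ω) ∂Q = ∫ ω, ∑ j, a j ω * (f (W ω) - f (W ω - g j ω)) ∂Q) :
    ⨆ t : ℝ, |Q.real {ω | W ω ≤ t} - stdGaussCDF t| ≤
      (√(0.4 * (A0 * δ ^ 2)) + √(2 * (A0 * δ ^ 2) + e)) ^ 2 := by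
  have hγ : ∀ t, stdGaussCDF t = (gaussianReal 0 1).real {x | id x ≤ t} := fun t => rfl
  set D := ⨆ t : ℝ, |Q.real {ω | W ω ≤ t} - stdGaussCDF t| with hD
  have hbdd : BddAbove (range fun t : ℝ => |Q.real {ω | W ω ≤ t} - stdGaussCDF t|) := by
    refine ⟨1, ?_⟩
    rintro _ ⟨t, rfl⟩
    have h1 : Q.real {ω | W ω ≤ t} ≤ 1 := measureReal_le_one
    have h2 : stdGaussCDF t ≤ 1 := by rw [hγ]; exact measureReal_le_one
    have h3 : 0 ≤ Q.real {ω | W ω ≤ t} := measureReal_nonneg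
    have h4 : 0 ≤ stdGaussCDF t := by rw [hγ]; exact measureReal_nonneg
    rw [abs_le]; constructor <;> linarith
  have hDt : ∀ t, |Q.real {ω | W ω ≤ t} - stdGaussCDF t| ≤ D := fun t => le_ciSup hbdd t
  have he0 : 0 ≤ e := (integral_nonneg fun _ => abs_nonneg _).trans hT
  have hbi : ∀ {F : Ω → ℝ}, Measurable F → (∃ K, ∀ ω, |F ω| ≤ K) → Integrable F Q := by
    rintro F hF ⟨K, hK⟩
    exact Integrable.of_bound hF.aestronglyMeasurable K (ae_of_all _ hK)
  have main : ∀ α z, 0 < α → |∫ ω, ramp z α (W ω) ∂Q - ∫ x, ramp z α x ∂(gaussianReal 0 1)| ≤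
      e + A0 * δ ^ 2 * (1.6 + 2 * D / α) := by
    intro α z hα
    obtain ⟨f, f', hf, hfe, hfb, hfb'⟩ := stein_exists (ramp z α) (ramp_cont z α)
      (ramp_nonneg z α) (ramp_le z α) (ramp_anti z hα)
    set N := ∫ x, ramp z α x ∂(gaussianReal 0 1)
    have hfc : Continuous f := continuous_iff_continuousAt.mpr fun x => (hf x).continuousAt
    have hfc' : Continuous f' := by
      have : f' = fun w => w * f w + ramp z α w - N := funext hfe
      rw [this]
      exact ((continuous_id.mul hfc).add (ramp_cont z α)).sub continuous_const
    set T : Ω → ℝ := fun ω => ∑ j, a j ω * g j ω with hTd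
    have hTm : Measurable T := Finset.measurable_sum _ fun j _ => (ham j).mul (hgm j)
    have haj : ∀ j ω, |a j ω| ≤ A0 := fun j ω =>
      (Finset.single_le_sum (f := fun j => |a j ω|) (fun i _ => abs_nonneg _)
        (Finset.mem_univ j)).trans (ha ω)
    have hTb : ∀ ω, |T ω| ≤ A0 * δ := by
      intro ω
      calc |T ω| ≤ ∑ j, |a j ω * g j ω| := Finset.abs_sum_le_sum_abs _ _
        _ ≤ ∑ j, |a j ω| * δ := by
            refine Finset.sum_le_sum fun j _ => ?_
            rw [abs_mul, abs_of_nonneg (hg0 j ω)]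
            exact mul_le_mul_of_nonneg_left (hgδ j ω) (abs_nonneg _)
        _ = (∑ j, |a j ω|) * δ := by rw [Finset.sum_mul]
        _ ≤ A0 * δ := by gcongr; exact ha ω
    set S : Ω → ℝ := fun ω => ∑ j, a j ω * (f (W ω) - f (W ω - g j ω)) with hSd
    have hSm : Measurable S := Finset.measurable_sum _ fun j _ =>
      (ham j).mul ((hfc.measurable.comp hW).sub (hfc.measurable.comp (hW.sub (hgm j))))
    set R : Ω → ℝ := fun ω =>
      A0 * (δ ^ 2 / 2 * (1.4 + |W ω|) + δ * (ramp z α (W ω - δ) - ramp z α (W ω))) with hRd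
    have hSR : ∀ ω, |S ω - f' (W ω) * T ω| ≤ R ω := by
      intro ω
      have e : S ω - f' (W ω) * T ω =
          ∑ j, a j ω * (f (W ω) - f (W ω - g j ω) - g j ω * f' (W ω)) := by
        simp only [hSd, hTd, Finset.mul_sum, ← Finset.sum_sub_distrib]
        refine Finset.sum_congr rfl fun j _ => by ring
      rw [e]
      set r := δ ^ 2 / 2 * (1.4 + |W ω|) + δ * (ramp z α (W ω - δ) - ramp z α (W ω)) with hr
      have hr0 : 0 ≤ r := by
        have : 0 ≤ ramp z α (W ω - δ) - ramp z α (W ω) :=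
          sub_nonneg.mpr (ramp_anti z hα (by linarith))
        positivity
      calc _ ≤ ∑ j, |a j ω * (f (W ω) - f (W ω - g j ω) - g j ω * f' (W ω))| :=
            Finset.abs_sum_le_sum_abs _ _
        _ ≤ ∑ j, |a j ω| * r := by
            refine Finset.sum_le_sum fun j _ => ?_
            rw [abs_mul]
            exact mul_le_mul_of_nonneg_left
              (stein_rem (ramp_anti z hα) hf hfe hfb hfb' (hg0 j ω) (hgδ j ω)) (abs_nonneg _)
        _ = (∑ j, |a j ω|) * r := by rw [Finset.sum_mul]
        _ ≤ A0 * r := by gcongr; exact ha ω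
    have hf'i : Integrable (fun ω => f' (W ω)) Q :=
      hbi (hfc'.measurable.comp hW) ⟨1, fun ω => hfb' _⟩
    have hf'Ti : Integrable (fun ω => f' (W ω) * T ω) Q :=
      hbi ((hfc'.measurable.comp hW).mul hTm) ⟨1 * (A0 * δ), fun ω => by
        rw [abs_mul]
        exact mul_le_mul (hfb' _) (hTb ω) (abs_nonneg _) zero_le_one⟩
    have hWf : Integrable (fun ω => W ω * f (W ω)) Q :=
      hbi (hW.mul (hfc.measurable.comp hW)) ⟨C * 1.4, fun ω => by
        rw [abs_mul]
        exact mul_le_mul (hWC _) (hfb _) (abs_nonneg _) ((abs_nonneg _).trans (hWC ω))⟩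
    have hWi : Integrable (fun ω => |W ω|) Q := hbi hW.abs ⟨C, fun ω => by
      rw [abs_abs]; exact hWC ω⟩
    have hri : ∀ c : ℝ, Integrable (fun ω => ramp z α (W ω - c)) Q := fun c =>
      hbi ((ramp_cont z α).measurable.comp (hW.sub_const c)) ⟨1, fun ω => by
        rw [abs_of_nonneg (ramp_nonneg _ _ _)]; exact ramp_le _ _ _⟩
    have hri0 : Integrable (fun ω => ramp z α (W ω)) Q := by simpa using hri 0
    have hRi : Integrable R Q :=
      ((((integrable_const 1.4).add hWi).const_mul _).add
        (((hri δ).sub hri0).const_mul _)).const_mul _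
    have hSi : Integrable S Q := by
      have h1 : Integrable (fun ω => S ω - f' (W ω) * T ω) Q :=
        hRi.mono' (hSm.sub ((hfc'.measurable.comp hW).mul hTm)).aestronglyMeasurable
          (ae_of_all _ hSR)
      have := h1.add hf'Ti
      refine this.congr (ae_of_all _ fun ω => ?_)
      simp
    have hkey : ∫ ω, ramp z α (W ω) ∂Q - N =
        ∫ ω, f' (W ω) * (1 - T ω) ∂Q - ∫ ω, (S ω - f' (W ω) * T ω) ∂Q := by
      rw [integral_sub hSi hf'Ti, ← hid f hfc hfb]
      have e1 : ∫ ω, ramp z α (W ω) ∂Q - N = ∫ ω, (f' (W ω) - W ω * f (W ω)) ∂Q := by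
        have : ∀ ω, f' (W ω) - W ω * f (W ω) = ramp z α (W ω) - N := fun ω => by
          rw [hfe]; ring
        simp_rw [this]
        rw [integral_sub hri0 (integrable_const _)]; simp
      have e2 : ∫ ω, f' (W ω) * (1 - T ω) ∂Q = ∫ ω, f' (W ω) ∂Q - ∫ ω, f' (W ω) * T ω ∂Q := by
        rw [← integral_sub hf'i hf'Ti]
        congr 1; ext ω; ring
      rw [e1, e2, integral_sub hf'i hWf]; ring
    have b1 : |∫ ω, f' (W ω) * (1 - T ω) ∂Q| ≤ e := by
      refine (abs_integral_le_integral_abs).trans (le_trans ?_ hT)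
      refine integral_mono_of_nonneg (ae_of_all _ fun _ => abs_nonneg _) ?_ (ae_of_all _ fun ω => ?_)
      · exact hbi (measurable_const.sub hTm).abs ⟨1 + A0 * δ, fun ω => by
          rw [abs_abs]
          have := abs_sub (1 : ℝ) (T ω)
          rw [abs_one] at this
          linarith [hTb ω]⟩
      · simp only
        rw [abs_mul]
        calc _ ≤ 1 * |1 - T ω| := by gcongr; exact hfb' _
          _ = _ := one_mul _
    have b2 : |∫ ω, (S ω - f' (W ω) * T ω) ∂Q| ≤ ∫ ω, R ω ∂Q := by
      refine (abs_integral_le_integral_abs).trans ?_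
      exact integral_mono_of_nonneg (ae_of_all _ fun _ => abs_nonneg _) hRi (ae_of_all _ hSR)
    have b3 : ∫ ω, (ramp z α (W ω - δ) - ramp z α (W ω)) ∂Q ≤ δ / α * (0.4 * α + 2 * D) := by
      rw [integral_sub (hri δ) hri0]
      have e1 : ∫ ω, ramp z α (W ω - δ) ∂Q = ∫ ω, ramp (z + δ) α (W ω) ∂Q := by
        congr 1; ext ω; unfold ramp; congr 3; ring
      rw [e1, ramp_integral Q hW _ hα, ramp_integral Q hW _ hα, ← mul_sub]
      have e2 : ∫ u in (0:ℝ)..α, Q.real {ω | W ω ≤ z + δ + u} =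
          ∫ u in δ..(α + δ), Q.real {ω | W ω ≤ z + u} := by
        have := intervalIntegral.integral_comp_add_right (a := 0) (b := α)
          (fun u => Q.real {ω | W ω ≤ z + u}) δ
        rw [zero_add] at this
        rw [← this]
        congr 1; ext u; congr 2; ext ω; rw [add_right_comm, ← add_assoc]
      have ii := cdf_intervalIntegrable Q W
      have e3 : (∫ u in δ..(α + δ), Q.real {ω | W ω ≤ z + u}) -
          ∫ u in (0:ℝ)..α, Q.real {ω | W ω ≤ z + u} =
          ∫ u in (0:ℝ)..δ, (Q.real {ω | W ω ≤ z + α + u} - Q.real {ω | W ω ≤ z + u}) := by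
        rw [intervalIntegral.integral_sub (ii _ _ _) (ii _ _ _)]
        have e4 : ∫ u in (0:ℝ)..δ, Q.real {ω | W ω ≤ z + α + u} =
            ∫ u in α..(α + δ), Q.real {ω | W ω ≤ z + u} := by
          have := intervalIntegral.integral_comp_add_right (a := 0) (b := δ)
            (fun u => Q.real {ω | W ω ≤ z + u}) α
          rw [zero_add, add_comm δ α] at this
          rw [← this]
          congr 1; ext u; congr 2; ext ω; rw [add_right_comm, ← add_assoc]
        rw [e4]
        have t1 := intervalIntegral.integral_add_adjacent_intervals (ii 0 δ z) (ii δ (α + δ) z)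
        have t2 := intervalIntegral.integral_add_adjacent_intervals (ii 0 α z) (ii α (α + δ) z)
        linarith
      rw [e2, e3]
      have b4 : ∫ u in (0:ℝ)..δ, (Q.real {ω | W ω ≤ z + α + u} - Q.real {ω | W ω ≤ z + u}) ≤
          ∫ u in (0:ℝ)..δ, (0.4 * α + 2 * D) := by
        refine intervalIntegral.integral_mono_on hδ.le ((ii _ _ _).sub (ii _ _ _))
          intervalIntegrable_const fun u _ => ?_
        have h1 := abs_le.mp (hDt (z + α + u))
        have h2 := abs_le.mp (hDt (z + u))
        have h3 := stdGaussCDF_lip (a := z + u) (b := z + α + u) (by linarith)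
        have : z + α + u - (z + u) = α := by ring
        rw [this] at h3
        linarith [h1.2, h2.1]
      calc _ ≤ α⁻¹ * ∫ u in (0:ℝ)..δ, (0.4 * α + 2 * D) := by gcongr
        _ = _ := by simp; field_simp
    have b5 : ∫ ω, R ω ∂Q ≤ A0 * δ ^ 2 * (1.6 + 2 * D / α) := by
      have : ∫ ω, R ω ∂Q = A0 * (δ ^ 2 / 2 * (1.4 + ∫ ω, |W ω| ∂Q) +
          δ * ∫ ω, (ramp z α (W ω - δ) - ramp z α (W ω)) ∂Q) := by
        simp only [hRd]
        rw [integral_const_mul, integral_add, integral_const_mul, integral_const_mul,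
          integral_add (integrable_const _) hWi]
        · simp
        · exact ((integrable_const 1.4).add hWi).const_mul _
        · exact ((hri δ).sub hri0).const_mul _
      rw [this]
      calc _ ≤ A0 * (δ ^ 2 / 2 * (1.4 + 1) + δ * (δ / α * (0.4 * α + 2 * D))) := by gcongr
        _ = _ := by field_simp; ring
    rw [hkey]
    refine (abs_sub _ _).trans ?_
    linarith
  refine stein_alg (by positivity) he0 fun α hα => ?_
  have ii := cdf_intervalIntegrable (gaussianReal 0 1) id
  rw [hD]
  refine ciSup_le fun t => ?_
  rw [← hD, abs_le]
  constructor
  · have h1 := (abs_le.mp (main α (t - α) hα)).1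
    have h2 : ∫ ω, ramp (t - α) α (W ω) ∂Q ≤ Q.real {ω | W ω ≤ t} := by
      rw [ramp_integral Q hW _ hα]
      have : ∫ u in (0:ℝ)..α, Q.real {ω | W ω ≤ t - α + u} ≤
          ∫ u in (0:ℝ)..α, Q.real {ω | W ω ≤ t} := by
        refine intervalIntegral.integral_mono_on hα.le (cdf_intervalIntegrable Q W _ _ _)
          intervalIntegrable_const fun u hu => ?_
        refine measureReal_mono fun ω hω => ?_
        have := hu.2
        exact le_trans (show W ω ≤ t - α + u from hω) (by linarith)
      calc _ ≤ α⁻¹ * ∫ u in (0:ℝ)..α, Q.real {ω | W ω ≤ t} := by gcongr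
        _ = _ := by simp; field_simp
    have h3 : stdGaussCDF t - 0.2 * α ≤ ∫ x, ramp (t - α) α x ∂(gaussianReal 0 1) := by
      have := ramp_integral (gaussianReal 0 1) (W := id) measurable_id (t - α) hα
      simp only [id] at this ii
      rw [this]
      have : ∫ u in (0:ℝ)..α, (stdGaussCDF t - 0.4 * α + 0.4 * u) ≤
          ∫ u in (0:ℝ)..α, (gaussianReal 0 1).real {ω | ω ≤ t - α + u} := by
        refine intervalIntegral.integral_mono_on hα.le
          (Continuous.intervalIntegrable (by fun_prop) _ _) (ii _ _ _) fun u hu => ?_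
        have h3 := stdGaussCDF_lip (a := t - α + u) (b := t) (by linarith [hu.2])
        have h4 := hγ (t - α + u)
        simp only [id] at h4
        rw [← h4]; linarith
      have e5 : ∫ u in (0:ℝ)..α, (stdGaussCDF t - 0.4 * α + 0.4 * u) =
          α * (stdGaussCDF t - 0.2 * α) := by
        rw [intervalIntegral.integral_add (by simp) (Continuous.intervalIntegrable (by fun_prop) _ _),
          intervalIntegral.integral_const_mul]
        simp; ring
      rw [e5] at this
      calc _ = α⁻¹ * (α * (stdGaussCDF t - 0.2 * α)) := by field_simp
        _ ≤ _ := by gcongr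
    linarith
  · have h1 := (abs_le.mp (main α t hα)).2
    have h2 : Q.real {ω | W ω ≤ t} ≤ ∫ ω, ramp t α (W ω) ∂Q := by
      rw [ramp_integral Q hW _ hα]
      have : ∫ u in (0:ℝ)..α, Q.real {ω | W ω ≤ t} ≤
          ∫ u in (0:ℝ)..α, Q.real {ω | W ω ≤ t + u} := by
        refine intervalIntegral.integral_mono_on hα.le intervalIntegrable_const
          (cdf_intervalIntegrable Q W _ _ _) fun u hu => ?_
        refine measureReal_mono fun ω hω => ?_
        have := hu.1
        exact le_trans (show W ω ≤ t from hω) (by linarith)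
      calc _ = α⁻¹ * ∫ u in (0:ℝ)..α, Q.real {ω | W ω ≤ t} := by simp; field_simp
        _ ≤ _ := by gcongr
    have h3 : ∫ x, ramp t α x ∂(gaussianReal 0 1) ≤ stdGaussCDF t + 0.2 * α := by
      have := ramp_integral (gaussianReal 0 1) (W := id) measurable_id t hα
      simp only [id] at this ii
      rw [this]
      have : ∫ u in (0:ℝ)..α, (gaussianReal 0 1).real {ω | ω ≤ t + u} ≤
          ∫ u in (0:ℝ)..α, (stdGaussCDF t + 0.4 * u) := by
        refine intervalIntegral.integral_mono_on hα.le (ii _ _ _)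
          (Continuous.intervalIntegrable (by fun_prop) _ _) fun u hu => ?_
        have h3 := stdGaussCDF_lip (a := t) (b := t + u) (by linarith [hu.1])
        have h4 := hγ (t + u)
        simp only [id] at h4
        rw [← h4]; linarith
      have e5 : ∫ u in (0:ℝ)..α, (stdGaussCDF t + 0.4 * u) =
          α * (stdGaussCDF t + 0.2 * α) := by
        rw [intervalIntegral.integral_add (by simp) (Continuous.intervalIntegrable (by fun_prop) _ _),
          intervalIntegral.integral_const_mul]
        simp; ring
      rw [e5] at this
      calc _ ≤ α⁻¹ * (α * (stdGaussCDF t + 0.2 * α)) := by gcongr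
        _ = _ := by field_simp
    linarith

end

section

lemma bdd_int {Ω : Type*} [MeasurableSpace Ω] {Q : Measure Ω} [IsFiniteMeasure Q]
    {F : Ω → ℝ} (hF : Measurable F) {K : ℝ} (hK : ∀ ω, |F ω| ≤ K) : Integrable F Q :=
  Integrable.of_bound hF.aestronglyMeasurable K (ae_of_all _ hK)

lemma abs_int_le {Ω : Type*} [MeasurableSpace Ω] {Q : Measure Ω} [IsProbabilityMeasure Q]
    {F : Ω → ℝ} {K : ℝ} (hK : ∀ ω, |F ω| ≤ K) : |∫ ω, F ω ∂Q| ≤ K := by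
  have := norm_integral_le_of_norm_le_const (μ := Q) (f := F) (C := K) (ae_of_all _ hK)
  simpa using this

lemma var_shift {Ω : Type*} [MeasurableSpace Ω] {Q : Measure Ω} [IsProbabilityMeasure Q]
    {F : Ω → ℝ} (hF : Measurable F) {K : ℝ} (hK : ∀ ω, |F ω| ≤ K) (c : ℝ) :
    ∫ ω, (F ω - c) ^ 2 ∂Q = ∫ ω, (F ω - ∫ ω, F ω ∂Q) ^ 2 ∂Q + (∫ ω, F ω ∂Q - c) ^ 2 := by
  set m := ∫ ω, F ω ∂Q with hm
  have hi := bdd_int (Q := Q) hF hK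
  have h1 : ∀ a : ℝ, ∫ ω, (F ω - a) ^ 2 ∂Q = ∫ ω, F ω ^ 2 ∂Q - 2 * a * m + a ^ 2 := by
    intro a
    have hi2 : Integrable (fun ω => F ω ^ 2) Q := bdd_int (K := K ^ 2) (hF.pow_const 2) fun ω => by
      rw [abs_pow]
      exact pow_le_pow_left₀ (abs_nonneg _) (hK ω) 2
    have e : ∀ ω, (F ω - a) ^ 2 = F ω ^ 2 - 2 * a * F ω + a ^ 2 := fun ω => by ring
    simp_rw [e]
    have hA : Integrable (fun ω => F ω ^ 2 - 2 * a * F ω) Q := hi2.sub (hi.const_mul _)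
    rw [integral_add hA (integrable_const _),
      integral_sub hi2 (hi.const_mul _), integral_const_mul]
    simp [hm]
  rw [h1, h1]; ring

lemma sq_int_le {Ω : Type*} [MeasurableSpace Ω] {Q : Measure Ω} [IsProbabilityMeasure Q]
    {F : Ω → ℝ} (hF : Measurable F) {K : ℝ} (hK : ∀ ω, |F ω| ≤ K) :
    (∫ ω, F ω ∂Q) ^ 2 ≤ ∫ ω, F ω ^ 2 ∂Q := by
  have := var_shift (Q := Q) hF hK 0
  simp only [sub_zero] at this
  rw [this]
  have : 0 ≤ ∫ ω, (F ω - ∫ ω, F ω ∂Q) ^ 2 ∂Q := integral_nonneg fun _ => sq_nonneg _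
  linarith

lemma var_le_shift {Ω : Type*} [MeasurableSpace Ω] {Q : Measure Ω} [IsProbabilityMeasure Q]
    {F : Ω → ℝ} (hF : Measurable F) {K : ℝ} (hK : ∀ ω, |F ω| ≤ K) (c : ℝ) :
    ∫ ω, (F ω - ∫ ω, F ω ∂Q) ^ 2 ∂Q ≤ ∫ ω, (F ω - c) ^ 2 ∂Q := by
  rw [var_shift hF hK c]
  nlinarith [sq_nonneg (∫ ω, F ω ∂Q - c)]

lemma mp_cons {X : Type*} [MeasurableSpace X] (P : Measure X) [IsProbabilityMeasure P] (n : ℕ) :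
    MeasurePreserving (fun z : X × (Fin n → X) => (Fin.cons z.1 z.2 : Fin (n + 1) → X))
      (P.prod (Measure.pi fun _ => P)) (Measure.pi fun _ => P) := by
  have h := (measurePreserving_piFinSuccAbove (fun _ : Fin (n + 1) => P) 0).symm
  convert h using 1
  funext z
  simp [MeasurableEquiv.piFinSuccAbove, Fin.insertNthEquiv]

lemma mp_update {X : Type*} [MeasurableSpace X] (P : Measure X) [IsProbabilityMeasure P] (n : ℕ)
    (j : Fin n) :
    MeasurePreserving (fun z : (Fin n → X) × X => Function.update z.1 j z.2)
      ((Measure.pi fun _ => P).prod P) (Measure.pi fun _ => P) := by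
  have hm : Measurable (fun z : (Fin n → X) × X => Function.update z.1 j z.2) := by
    rw [measurable_pi_iff]
    intro i
    by_cases h : i = j
    · subst h; simpa using measurable_snd
    · simp only [Function.update_of_ne h]
      exact (measurable_pi_apply i).comp measurable_fst
  refine ⟨hm, ?_⟩
  refine (Measure.pi_eq fun s hs => ?_).symm
  rw [Measure.map_apply hm (MeasurableSet.univ_pi hs)]
  have : (fun z : (Fin n → X) × X => Function.update z.1 j z.2) ⁻¹' (univ.pi s) =
      (univ.pi (Function.update s j univ)) ×ˢ (s j) := by
    ext ⟨ω, x⟩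
    simp only [mem_preimage, Set.mem_pi, mem_univ, true_implies, mem_prod]
    constructor
    · intro h
      refine ⟨fun i => ?_, by simpa using h j⟩
      by_cases hi : i = j
      · subst hi; simp
      · simpa [Function.update_of_ne hi] using h i
    · rintro ⟨h1, h2⟩ i
      by_cases hi : i = j
      · subst hi; simpa using h2
      · simpa [Function.update_of_ne hi] using h1 i
  rw [this, Measure.prod_prod, Measure.pi_pi]
  rw [← Finset.prod_erase_mul _ _ (Finset.mem_univ j),
    ← Finset.prod_erase_mul Finset.univ (fun i => P (s i)) (Finset.mem_univ j)]
  simp only [Function.update_self, measure_univ, mul_one]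
  congr 1
  refine Finset.prod_congr rfl fun i hi => ?_
  rw [Function.update_of_ne (Finset.ne_of_mem_erase hi)]

lemma integral_update {X : Type*} [MeasurableSpace X] (P : Measure X) [IsProbabilityMeasure P]
    {n : ℕ} (j : Fin n) {F : (Fin n → X) → ℝ} (hF : Measurable F) {K : ℝ} (hK : ∀ ω, |F ω| ≤ K) :
    ∫ ω, F ω ∂(Measure.pi fun _ => P) =
      ∫ ω, ∫ x, F (Function.update ω j x) ∂P ∂(Measure.pi fun _ => P) := by
  have h := mp_update P n j
  rw [← h.map_eq, integral_map h.measurable.aemeasurable hF.aestronglyMeasurable, integral_prod]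
  · rw [h.map_eq]
  · exact bdd_int (hF.comp h.measurable) fun z => hK _

theorem efron_stein {X : Type*} [MeasurableSpace X] (P : Measure X) [IsProbabilityMeasure P]
    (K : ℝ) (n : ℕ) : ∀ (f : (Fin n → X) → ℝ), Measurable f → (∀ ω, |f ω| ≤ K) →
    ∀ g : Fin n → (Fin n → X) → ℝ, (∀ k, Measurable (g k)) → (∀ k ω, |g k ω| ≤ K) →
      (∀ k ω x, g k (Function.update ω k x) = g k ω) →
    ∫ ω, (f ω - ∫ ω, f ω ∂(Measure.pi fun _ => P)) ^ 2 ∂(Measure.pi fun _ => P) ≤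
      ∑ k, ∫ ω, (f ω - g k ω) ^ 2 ∂(Measure.pi fun _ => P) := by
  induction n with
  | zero =>
    intro f hf hfK g _ _ _
    have : ∀ ω, f ω = f default := fun ω => congrArg f (Subsingleton.elim _ _)
    simp [this]
  | succ n ih =>
    intro f hf hfK g hg hgK hgu
    set Q : Measure (Fin n → X) := Measure.pi fun _ => P with hQ
    have hmp := mp_cons P n
    have hsplit : ∀ F : (Fin (n + 1) → X) → ℝ, Measurable F → (∃ K, ∀ ω, |F ω| ≤ K) →
        ∫ ω, F ω ∂(Measure.pi fun _ => P) = ∫ x, ∫ ω, F (Fin.cons x ω) ∂Q ∂P := by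
      rintro F hF ⟨K', hK'⟩
      rw [← hmp.map_eq, integral_map hmp.measurable.aemeasurable hF.aestronglyMeasurable,
        integral_prod]
      exact bdd_int (hF.comp hmp.measurable) fun z => hK' _
    have hsqb : ∀ a b : ℝ, |a| ≤ K → |b| ≤ K → |(a - b) ^ 2| ≤ (2 * K) ^ 2 := by
      intro a b ha hb
      rw [abs_pow]
      refine pow_le_pow_left₀ (abs_nonneg _) ?_ 2
      have := abs_sub a b
      linarith
    have hcx : ∀ x : X, Measurable (fun ω : Fin n → X => (Fin.cons x ω : Fin (n + 1) → X)) :=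
      fun x => hmp.measurable.comp measurable_prodMk_left
    have hmint : ∀ F : (Fin (n + 1) → X) → ℝ, Measurable F →
        Measurable (fun x => ∫ ω, F (Fin.cons x ω) ∂Q) := by
      intro F hF
      have : StronglyMeasurable (Function.uncurry fun (x : X) (ω : Fin n → X) =>
        F (Fin.cons x ω)) := (hF.comp hmp.measurable).stronglyMeasurable
      exact this.integral_prod_right.measurable
    set m := ∫ ω, f ω ∂(Measure.pi fun _ => P) with hm
    have hmK : |m| ≤ K := abs_int_le hfK
    set F : X → ℝ := fun x => ∫ ω, f (Fin.cons x ω) ∂Q with hFd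
    have hFm : Measurable F := hmint f hf
    have hFK : ∀ x, |F x| ≤ K := fun x => abs_int_le fun ω => hfK _
    have hmF : m = ∫ x, F x ∂P := hsplit f hf ⟨K, hfK⟩
    have hx0 : ∀ x y (ω : Fin n → X), g 0 (Fin.cons x ω) = g 0 (Fin.cons y ω) := by
      intro x y ω
      rw [← hgu 0 (Fin.cons x ω) y, Fin.update_cons_zero]
    have hLm : ∀ h : (Fin (n + 1) → X) → ℝ, Measurable h → Measurable fun ω => (f ω - h ω) ^ 2 :=
      fun h hh => (hf.sub hh).pow_const 2
    -- per-x bound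
    have hx : ∀ x, ∫ ω, (f (Fin.cons x ω) - m) ^ 2 ∂Q ≤
        (∑ k : Fin n, ∫ ω, (f (Fin.cons x ω) - g k.succ (Fin.cons x ω)) ^ 2 ∂Q) + (F x - m) ^ 2 := by
      intro x
      rw [var_shift (F := fun ω => f (Fin.cons x ω)) (hf.comp (hcx x)) (fun ω => hfK _) m]
      refine add_le_add ?_ le_rfl
      refine ih (fun ω => f (Fin.cons x ω)) (hf.comp (hcx x)) (fun ω => hfK _)
        (fun k ω => g k.succ (Fin.cons x ω)) (fun k => (hg _).comp (hcx x)) (fun k ω => hgK _ _) ?_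
      intro k ω y
      beta_reduce
      rw [Fin.cons_update, hgu]
    have hFG : ∫ x, (F x - m) ^ 2 ∂P ≤ ∫ x, ∫ ω, (f (Fin.cons x ω) - g 0 (Fin.cons x ω)) ^ 2 ∂Q ∂P := by
      obtain ⟨x0⟩ : Nonempty X := nonempty_of_isProbabilityMeasure P
      set G := ∫ ω, g 0 (Fin.cons x0 ω) ∂Q with hG
      calc ∫ x, (F x - m) ^ 2 ∂P ≤ ∫ x, (F x - G) ^ 2 ∂P := by
            rw [hmF]; exact var_le_shift hFm hFK G
        _ ≤ _ := by
          refine integral_mono_of_nonneg (ae_of_all _ fun _ => sq_nonneg _) ?_ (ae_of_all _ fun x => ?_)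
          · exact bdd_int (hmint _ (hLm _ (hg 0))) fun x => abs_int_le fun ω =>
              hsqb _ _ (hfK _) (hgK 0 _)
          · simp only
            have e : F x - G = ∫ ω, (f (Fin.cons x ω) - g 0 (Fin.cons x ω)) ∂Q := by
              have i1 : Integrable (fun ω => f (Fin.cons x ω)) Q :=
                bdd_int (F := fun ω => f (Fin.cons x ω)) (hf.comp (hcx x)) fun ω => hfK _
              have i2 : Integrable (fun ω => g 0 (Fin.cons x ω)) Q :=
                bdd_int (F := fun ω => g 0 (Fin.cons x ω)) ((hg 0).comp (hcx x)) fun ω => hgK 0 _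
              rw [integral_sub i1 i2, hG]
              congr 2
              ext ω; exact hx0 _ _ _
            rw [e]
            refine sq_int_le (K := 2 * K) ((hf.sub (hg 0)).comp (hcx x)) fun ω => ?_
            have := abs_sub (f (Fin.cons x ω)) (g 0 (Fin.cons x ω))
            linarith [hfK (Fin.cons x ω), hgK 0 (Fin.cons x ω)]
    have hterm : ∀ k, ∫ ω, (f ω - g k ω) ^ 2 ∂(Measure.pi fun _ => P) =
        ∫ x, ∫ ω, (f (Fin.cons x ω) - g k (Fin.cons x ω)) ^ 2 ∂Q ∂P := fun k =>
      hsplit _ (hLm _ (hg k)) ⟨_, fun ω => hsqb _ _ (hfK _) (hgK k _)⟩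
    have hti : ∀ k, Integrable
        (fun x => ∫ ω, (f (Fin.cons x ω) - g k (Fin.cons x ω)) ^ 2 ∂Q) P := fun k =>
      bdd_int (hmint _ (hLm _ (hg k))) fun x => abs_int_le fun ω => hsqb _ _ (hfK _) (hgK k _)
    rw [hsplit (fun ω => (f ω - m) ^ 2) (hLm _ measurable_const) ⟨_, fun ω => hsqb _ _ (hfK _) hmK⟩,
      Fin.sum_univ_succ]
    simp_rw [hterm]
    have hFi : Integrable (fun x => (F x - m) ^ 2) P :=
      bdd_int ((hFm.sub_const m).pow_const 2) fun x => hsqb _ _ (hFK x) hmK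
    calc _ ≤ ∫ x, ((∑ k : Fin n, ∫ ω, (f (Fin.cons x ω) - g k.succ (Fin.cons x ω)) ^ 2 ∂Q) +
            (F x - m) ^ 2) ∂P := by
          refine integral_mono ?_ ?_ hx
          · exact bdd_int (hmint (fun ω => (f ω - m) ^ 2) (hLm _ measurable_const)) fun x =>
              abs_int_le fun ω => hsqb _ _ (hfK _) hmK
          · exact (integrable_finsetSum _ fun k _ => hti k.succ).add hFi
      _ = (∑ k : Fin n, ∫ x, ∫ ω, (f (Fin.cons x ω) - g k.succ (Fin.cons x ω)) ^ 2 ∂Q ∂P) +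
            ∫ x, (F x - m) ^ 2 ∂P := by
          rw [integral_add (integrable_finsetSum _ fun k _ => hti k.succ) hFi,
            integral_finsetSum _ fun k _ => hti k.succ]
      _ ≤ _ := by linarith

end

section

/-- Bounded measurable kernel with constant marginals. -/
structure CovK {X : Type*} [MeasurableSpace X] (P : Measure X) (k : X → X → ℝ) (p : ℝ) : Prop where
  meas : Measurable (Function.uncurry k)
  nn : ∀ x y, 0 ≤ k x y
  le1 : ∀ x y, k x y ≤ 1
  intr : ∀ x, ∫ y, k x y ∂P = p
  intl : ∀ y, ∫ x, k x y ∂P = p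

def unc {X : Type*} {n : ℕ} (k : X → X → ℝ) (J : Finset (Fin n)) (ω : Fin n → X) (y : X) : ℝ :=
  ∏ i ∈ J, (1 - k (ω i) y)

def UU {X : Type*} [MeasurableSpace X] {n : ℕ} (P : Measure X) (k : X → X → ℝ)
    (J : Finset (Fin n)) (ω : Fin n → X) : ℝ := ∫ y, unc k J ω y ∂P

def HH {X : Type*} [MeasurableSpace X] {n : ℕ} (P : Measure X) (k : X → X → ℝ)
    (J : Finset (Fin n)) (j : Fin n) (ω : Fin n → X) : ℝ := ∫ y, unc k J ω y * k (ω j) y ∂P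

def cc {X : Type*} [MeasurableSpace X] (P : Measure X) (k : X → X → ℝ) (a b : X) : ℝ :=
  ∫ y, k a y * k b y ∂P

section
variable {X : Type*} [MeasurableSpace X] {P : Measure X} [IsProbabilityMeasure P]
  {k : X → X → ℝ} {p : ℝ} {n : ℕ}

lemma unc_nonneg (h : CovK P k p) (J : Finset (Fin n)) (ω : Fin n → X) (y : X) :
    0 ≤ unc k J ω y :=
  Finset.prod_nonneg fun i _ => sub_nonneg.2 (h.le1 _ _)

lemma unc_le_one (h : CovK P k p) (J : Finset (Fin n)) (ω : Fin n → X) (y : X) :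
    unc k J ω y ≤ 1 :=
  Finset.prod_le_one (fun i _ => sub_nonneg.2 (h.le1 _ _))
    (fun i _ => by linarith [h.nn (ω i) y])

lemma kmeas_l (h : CovK P k p) (x : X) : Measurable (fun y => k x y) :=
  h.meas.comp measurable_prodMk_left

lemma kmeas_r (h : CovK P k p) (y : X) : Measurable (fun x => k x y) :=
  h.meas.comp measurable_prodMk_right

lemma kmeas_ev (h : CovK P k p) (j : Fin n) :
    Measurable (fun z : (Fin n → X) × X => k (z.1 j) z.2) :=
  h.meas.comp (g := Function.uncurry k) (f := fun z : (Fin n → X) × X => (z.1 j, z.2))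
    (((measurable_pi_apply j).comp measurable_fst).prodMk measurable_snd)

lemma unc_meas (h : CovK P k p) (J : Finset (Fin n)) :
    Measurable (fun z : (Fin n → X) × X => unc k J z.1 z.2) := by
  unfold unc
  exact Finset.measurable_prod _ fun i _ => (kmeas_ev h i).const_sub 1

lemma unc_meas_l (h : CovK P k p) (J : Finset (Fin n)) (ω : Fin n → X) :
    Measurable (fun y => unc k J ω y) :=
  (unc_meas h J).comp measurable_prodMk_left

lemma k_abs (h : CovK P k p) (x y : X) : |k x y| ≤ 1 := by
  rw [abs_of_nonneg (h.nn _ _)]; exact h.le1 _ _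

lemma unc_abs (h : CovK P k p) (J : Finset (Fin n)) (ω : Fin n → X) (y : X) :
    |unc k J ω y| ≤ 1 := by
  rw [abs_of_nonneg (unc_nonneg h _ _ _)]; exact unc_le_one h _ _ _

lemma mul_abs_le_one {a b : ℝ} (ha : |a| ≤ 1) (hb : |b| ≤ 1) : |a * b| ≤ 1 := by
  rw [abs_mul]; exact mul_le_one₀ ha (abs_nonneg _) hb

lemma k_int (h : CovK P k p) (x : X) : Integrable (fun y => k x y) P :=
  bdd_int (kmeas_l h x) (k_abs h x)

lemma unc_int (h : CovK P k p) (J : Finset (Fin n)) (ω : Fin n → X) :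
    Integrable (fun y => unc k J ω y) P :=
  bdd_int (unc_meas_l h J ω) (unc_abs h J ω)

lemma unck_int (h : CovK P k p) (J : Finset (Fin n)) (ω : Fin n → X) (x : X) :
    Integrable (fun y => unc k J ω y * k x y) P :=
  bdd_int ((unc_meas_l h J ω).mul (kmeas_l h x)) fun y => mul_abs_le_one (unc_abs h J ω y) (k_abs h x y)

lemma kk_int (h : CovK P k p) (a b : X) : Integrable (fun y => k a y * k b y) P :=
  bdd_int ((kmeas_l h a).mul (kmeas_l h b)) fun y => mul_abs_le_one (k_abs h a y) (k_abs h b y)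

lemma UU_meas (h : CovK P k p) (J : Finset (Fin n)) : Measurable (UU P k J) :=
  (StronglyMeasurable.integral_prod_right
    (f := fun (ω : Fin n → X) (y : X) => unc k J ω y) (unc_meas h J).stronglyMeasurable).measurable

lemma HH_meas (h : CovK P k p) (J : Finset (Fin n)) (j : Fin n) : Measurable (HH P k J j) :=
  (StronglyMeasurable.integral_prod_right
    (f := fun (ω : Fin n → X) (y : X) => unc k J ω y * k (ω j) y)
    ((unc_meas h J).mul (kmeas_ev h j)).stronglyMeasurable).measurable

lemma cc_meas (h : CovK P k p) : Measurable (fun z : X × X => cc P k z.1 z.2) := by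
  refine (StronglyMeasurable.integral_prod_right
    (f := fun (z : X × X) (y : X) => k z.1 y * k z.2 y) (Measurable.stronglyMeasurable ?_)).measurable
  exact (h.meas.comp ((measurable_fst.comp measurable_fst).prodMk measurable_snd)).mul
    (h.meas.comp ((measurable_snd.comp measurable_fst).prodMk measurable_snd))

lemma cc_nonneg (h : CovK P k p) (a b : X) : 0 ≤ cc P k a b :=
  integral_nonneg fun y => mul_nonneg (h.nn _ _) (h.nn _ _)

lemma cc_le (h : CovK P k p) (a b : X) : cc P k a b ≤ p := by
  rw [← h.intr a]
  exact integral_mono (kk_int h a b) (k_int h a)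
    fun y => mul_le_of_le_one_right (h.nn _ _) (h.le1 _ _)

lemma p_nonneg (h : CovK P k p) : 0 ≤ p := by
  obtain ⟨x0⟩ : Nonempty X := nonempty_of_isProbabilityMeasure P
  rw [← h.intr x0]; exact integral_nonneg fun y => h.nn _ _

lemma p_le_one (h : CovK P k p) : p ≤ 1 := by
  obtain ⟨x0⟩ : Nonempty X := nonempty_of_isProbabilityMeasure P
  rw [← h.intr x0]
  exact (le_abs_self _).trans (abs_int_le fun y => k_abs h x0 y)

lemma swap_bdd {f : X → X → ℝ} (hf : Measurable (Function.uncurry f)) {K : ℝ}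
    (hK : ∀ x y, |f x y| ≤ K) : ∫ x, ∫ y, f x y ∂P ∂P = ∫ y, ∫ x, f x y ∂P ∂P :=
  integral_integral_swap (bdd_int (Q := P.prod P) hf fun z => hK z.1 z.2)

lemma cc_int_l (h : CovK P k p) (b : X) : ∫ a, cc P k a b ∂P = p ^ 2 := by
  unfold cc
  rw [swap_bdd (K := 1) (f := fun a y => k a y * k b y)
    (h.meas.mul ((kmeas_l h b).comp measurable_snd))
    fun x y => mul_abs_le_one (k_abs h x y) (k_abs h b y)]
  simp_rw [integral_mul_const, h.intl, integral_const_mul, h.intr]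
  ring

lemma HH_nonneg (h : CovK P k p) (J : Finset (Fin n)) (j : Fin n) (ω : Fin n → X) :
    0 ≤ HH P k J j ω := integral_nonneg fun y => mul_nonneg (unc_nonneg h _ _ _) (h.nn _ _)

lemma HH_le (h : CovK P k p) (J : Finset (Fin n)) (j : Fin n) (ω : Fin n → X) :
    HH P k J j ω ≤ p := by
  rw [← h.intr (ω j)]
  exact integral_mono (unck_int h J ω (ω j)) (k_int h _)
    fun y => mul_le_of_le_one_left (h.nn _ _) (unc_le_one h _ _ _)

lemma UU_nonneg (h : CovK P k p) (J : Finset (Fin n)) (ω : Fin n → X) :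
    0 ≤ UU P k J ω := integral_nonneg fun y => unc_nonneg h _ _ _

lemma UU_le (h : CovK P k p) (J : Finset (Fin n)) (ω : Fin n → X) :
    UU P k J ω ≤ 1 := (le_abs_self _).trans (abs_int_le fun y => unc_abs h J ω y)

lemma UU_insert (h : CovK P k p) {J : Finset (Fin n)} {j : Fin n} (hj : j ∉ J) (ω : Fin n → X) :
    UU P k (insert j J) ω = UU P k J ω - HH P k J j ω := by
  unfold UU HH
  rw [← integral_sub (unc_int h J ω) (unck_int h J ω _)]
  congr 1
  ext y
  unfold unc
  rw [Finset.prod_insert hj]; ring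

lemma unc_erase (h : CovK P k p) (J : Finset (Fin n)) (l : Fin n) (ω : Fin n → X) (y : X) :
    |unc k J ω y - unc k (J.erase l) ω y| ≤ k (ω l) y := by
  by_cases hl : l ∈ J
  · have : unc k J ω y = (1 - k (ω l) y) * unc k (J.erase l) ω y := by
      unfold unc; rw [Finset.mul_prod_erase J (fun i => 1 - k (ω i) y) hl]
    rw [this]
    have h0 := unc_nonneg h (J.erase l) ω y
    have h1 := unc_le_one h (J.erase l) ω y
    have h2 := h.nn (ω l) y
    rw [abs_le]; constructor <;> nlinarith
  · rw [Finset.erase_eq_of_notMem hl]; simpa using h.nn _ _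

lemma UU_erase (h : CovK P k p) (J : Finset (Fin n)) (l : Fin n) (ω : Fin n → X) :
    |UU P k J ω - UU P k (J.erase l) ω| ≤ p := by
  unfold UU
  rw [← integral_sub (unc_int h J ω) (unc_int h _ ω), ← h.intr (ω l)]
  exact (abs_integral_le_integral_abs).trans
    (integral_mono ((unc_int h J ω).sub (unc_int h _ ω)).abs (k_int h _)
      fun y => unc_erase h J l ω y)

lemma HH_erase (h : CovK P k p) (J : Finset (Fin n)) (j l : Fin n) (ω : Fin n → X) :
    |HH P k J j ω - HH P k (J.erase l) j ω| ≤ cc P k (ω j) (ω l) := by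
  unfold HH cc
  rw [← integral_sub (unck_int h J ω _) (unck_int h _ ω _)]
  refine (abs_integral_le_integral_abs).trans
    (integral_mono ((unck_int h J ω _).sub (unck_int h _ ω _)).abs (kk_int h _ _) fun y => ?_)
  have := unc_erase h J l ω y
  simp only [Pi.sub_apply]
  rw [← sub_mul, abs_mul, abs_of_nonneg (h.nn (ω j) y), mul_comm]
  exact mul_le_mul_of_nonneg_left this (h.nn _ _)

lemma unc_update {J : Finset (Fin n)} {j : Fin n} (hj : j ∉ J) (ω : Fin n → X) (x y : X) :
    unc k J (Function.update ω j x) y = unc k J ω y := by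
  unfold unc
  refine Finset.prod_congr rfl fun i hi => ?_
  rw [Function.update_of_ne]; rintro rfl; exact hj hi

lemma UU_update {J : Finset (Fin n)} {j : Fin n} (hj : j ∉ J) (ω : Fin n → X) (x : X) :
    UU P k J (Function.update ω j x) = UU P k J ω := by
  unfold UU; simp_rw [unc_update hj]

lemma HH_update {J : Finset (Fin n)} {i j : Fin n} (hj : j ∉ J) (hij : i ≠ j) (ω : Fin n → X)
    (x : X) : HH P k J i (Function.update ω j x) = HH P k J i ω := by
  unfold HH; simp_rw [unc_update hj, Function.update_of_ne hij]

/-- the increments; `l`-erased versions are obtained by changing the index sets -/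
def Dd (P : Measure X) (k : X → X → ℝ) (p : ℝ) (J : Finset (Fin n)) (j : Fin n)
    (ω : Fin n → X) : ℝ := (1 - p) ^ (n - 1 - (j : ℕ)) * (HH P k J j ω - p * UU P k J ω)

lemma w_nonneg (h : CovK P k p) (m : ℕ) : 0 ≤ (1 - p) ^ m :=
  pow_nonneg (sub_nonneg.2 (p_le_one h)) m

lemma w_le_one (h : CovK P k p) (m : ℕ) : (1 - p) ^ m ≤ 1 :=
  pow_le_one₀ (sub_nonneg.2 (p_le_one h)) (by linarith [p_nonneg h])

lemma Dd_meas (h : CovK P k p) (J : Finset (Fin n)) (j : Fin n) : Measurable (Dd P k p J j) :=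
  ((HH_meas h J j).sub ((UU_meas h J).const_mul p)).const_mul _

lemma Dd_abs' (h : CovK P k p) (J : Finset (Fin n)) (j : Fin n) (ω : Fin n → X) :
    |Dd P k p J j ω| ≤ (1 - p) ^ (n - 1 - (j : ℕ)) * p := by
  unfold Dd
  rw [abs_mul, abs_of_nonneg (w_nonneg h _)]
  refine mul_le_mul_of_nonneg_left ?_ (w_nonneg h _)
  have h1 := HH_nonneg h J j ω
  have h2 := HH_le h J j ω
  have h3 := UU_nonneg h J ω
  have h4 := UU_le h J ω
  have h5 := p_nonneg h
  rw [abs_le]; constructor <;> nlinarith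

lemma Dd_abs (h : CovK P k p) (J : Finset (Fin n)) (j : Fin n) (ω : Fin n → X) :
    |Dd P k p J j ω| ≤ p :=
  (Dd_abs' h J j ω).trans (mul_le_of_le_one_left (p_nonneg h) (w_le_one h _))

lemma Dd_erase (h : CovK P k p) (J : Finset (Fin n)) (j l : Fin n) (ω : Fin n → X) :
    |Dd P k p J j ω - Dd P k p (J.erase l) j ω| ≤ cc P k (ω j) (ω l) + p ^ 2 := by
  unfold Dd
  rw [← mul_sub, abs_mul, abs_of_nonneg (w_nonneg h _)]
  refine (mul_le_of_le_one_left (abs_nonneg _) (w_le_one h _)).trans ?_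
  have h1 := HH_erase h J j l ω
  have h2 := UU_erase h J l ω
  have h5 := p_nonneg h
  rw [abs_le] at *
  constructor <;> nlinarith

/-- zero mean -/
lemma Dd_zero (h : CovK P k p) {J : Finset (Fin n)} {j : Fin n} (hj : j ∉ J)
    {F : (Fin n → X) → ℝ} (hF : Measurable F) {K : ℝ} (hK : ∀ ω, |F ω| ≤ K)
    (hFu : ∀ ω x, F (Function.update ω j x) = F ω) :
    ∫ ω, Dd P k p J j ω * F ω ∂(Measure.pi fun _ => P) = 0 := by
  rw [integral_update P j (F := fun ω => Dd P k p J j ω * F ω) ((Dd_meas h J j).mul hF) (K := p * K)]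
  · simp_rw [hFu]
    rw [integral_eq_zero_of_ae]
    refine ae_of_all _ fun ω => ?_
    simp only [Pi.zero_apply]
    rw [integral_mul_const]
    have : ∫ x, Dd P k p J j (Function.update ω j x) ∂P = 0 := by
      unfold Dd
      simp_rw [UU_update hj]
      rw [integral_const_mul]
      have e : ∀ x, HH P k J j (Function.update ω j x) = ∫ y, unc k J ω y * k x y ∂P := by
        intro x; unfold HH; simp_rw [unc_update hj, Function.update_self]
      simp_rw [e]
      have hm : Measurable (Function.uncurry fun (x y : X) => unc k J ω y * k x y) :=
        ((unc_meas_l h J ω).comp measurable_snd).mul h.meas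
      have i1 : Integrable (fun x => ∫ y, unc k J ω y * k x y ∂P) P :=
        bdd_int (K := 1) (hm.stronglyMeasurable.integral_prod_right.measurable)
          fun x => abs_int_le fun y => mul_abs_le_one (unc_abs h J ω y) (k_abs h x y)
      rw [integral_sub i1 (integrable_const _),
        swap_bdd hm (K := 1) fun x y => mul_abs_le_one (unc_abs h J ω y) (k_abs h x y)]
      simp_rw [integral_const_mul, h.intl, integral_mul_const]
      simp [UU, mul_comm]
    rw [this, zero_mul]
  · intro ω
    rw [abs_mul]
    exact mul_le_mul (Dd_abs h J j ω) (hK ω) (abs_nonneg _) (p_nonneg h)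

lemma Dd_sum (h : CovK P k p) (ω : Fin n → X) :
    ∑ j, Dd P k p (Finset.Iio j) j ω = (1 - p) ^ n - UU P k Finset.univ ω := by
  set A : ℕ → ℝ := fun m =>
    (1 - p) ^ (n - m) * UU P k (Finset.univ.filter fun i : Fin n => (i : ℕ) < m) ω with hA
  have hD : ∀ j : Fin n, Dd P k p (Finset.Iio j) j ω = A j - A (j + 1) := by
    intro j
    have hs : (Finset.univ.filter fun i : Fin n => (i : ℕ) < j) = Finset.Iio j := by
      ext i; simp
    have hs2 : (Finset.univ.filter fun i : Fin n => (i : ℕ) < j + 1) = insert j (Finset.Iio j) := by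
      ext i; simp [Order.lt_add_one_iff, le_iff_eq_or_lt, Fin.ext_iff]
    have hn : n - (j : ℕ) = n - 1 - j + 1 := by have := j.2; omega
    have hn2 : n - ((j : ℕ) + 1) = n - 1 - j := by omega
    simp only [hA, hs, hs2]
    rw [UU_insert h (by simp), hn2, hn, pow_succ, Dd]
    ring
  simp_rw [hD]
  rw [← Finset.sum_range fun m => A m - A (m + 1), Finset.sum_range_sub']
  simp only [hA]
  have hs : (Finset.univ.filter fun i : Fin n => (i : ℕ) < n) = Finset.univ := by
    ext i; simp
  rw [hs]
  simp [UU, unc]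

lemma Dd_sum_abs (h : CovK P k p) (ω : Fin n → X) :
    ∑ j, |Dd P k p (Finset.Iio j) j ω| ≤ 1 - (1 - p) ^ n := by
  refine (Finset.sum_le_sum fun j _ => Dd_abs' h (Finset.Iio j) j ω).trans (le_of_eq ?_)
  rw [Fin.sum_univ_eq_sum_range (fun j => (1 - p) ^ (n - 1 - j) * p), ← Finset.sum_mul,
    Finset.sum_range_reflect (fun j => (1 - p) ^ j)]
  have := geom_sum_mul (1 - p) n
  linarith

lemma UU_sub (h : CovK P k p) (j : Fin n) (ω : Fin n → X) :
    UU P k Finset.univ ω = UU P k (Finset.univ.erase j) ω - HH P k (Finset.univ.erase j) j ω := by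
  rw [← UU_insert h (Finset.notMem_erase j _), Finset.insert_erase (Finset.mem_univ j)]

end

end

section

def TT {X : Type*} [MeasurableSpace X] {n : ℕ} (P : Measure X) (k : X → X → ℝ) (p : ℝ)
    (ω : Fin n → X) : ℝ :=
  ∑ j, Dd P k p (Finset.Iio j) j ω * HH P k (Finset.univ.erase j) j ω

def Tl {X : Type*} [MeasurableSpace X] {n : ℕ} (P : Measure X) (k : X → X → ℝ) (p : ℝ)
    (l : Fin n) (ω : Fin n → X) : ℝ :=
  ∑ j ∈ Finset.univ.erase l, Dd P k p ((Finset.Iio j).erase l) j ω *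
    HH P k ((Finset.univ.erase j).erase l) j ω

def RR {X : Type*} [MeasurableSpace X] {n : ℕ} (P : Measure X) (k : X → X → ℝ)
    (l : Fin n) (ω : Fin n → X) : ℝ :=
  ∑ j ∈ Finset.univ.erase l, cc P k (ω j) (ω l)

section
variable {X : Type*} [MeasurableSpace X] {P : Measure X} [IsProbabilityMeasure P]
  {k : X → X → ℝ} {p : ℝ} {n : ℕ}

lemma DH_abs (h : CovK P k p) (J J' : Finset (Fin n)) (j : Fin n) (ω : Fin n → X) :
    |Dd P k p J j ω * HH P k J' j ω| ≤ p ^ 2 := by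
  rw [abs_mul, abs_of_nonneg (HH_nonneg h J' j ω), sq]
  exact mul_le_mul (Dd_abs h J j ω) (HH_le h J' j ω) (HH_nonneg h J' j ω) (p_nonneg h)

lemma TT_meas (h : CovK P k p) : Measurable (TT (n := n) P k p) := by
  unfold TT
  exact Finset.measurable_sum _ fun j _ => (Dd_meas h _ j).mul (HH_meas h _ j)

lemma Tl_meas (h : CovK P k p) (l : Fin n) : Measurable (Tl P k p l) := by
  unfold Tl
  exact Finset.measurable_sum _ fun j _ => (Dd_meas h _ j).mul (HH_meas h _ j)

lemma sum_abs_le_card {s : Finset (Fin n)} {f : Fin n → ℝ} {K : ℝ} (hK0 : 0 ≤ K)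
    (hK : ∀ i ∈ s, |f i| ≤ K) : |∑ i ∈ s, f i| ≤ n * K := by
  refine (Finset.abs_sum_le_sum_abs _ _).trans ((Finset.sum_le_sum hK).trans ?_)
  rw [Finset.sum_const, nsmul_eq_mul]
  refine mul_le_mul_of_nonneg_right ?_ hK0
  exact_mod_cast (Finset.card_le_univ s).trans_eq (Fintype.card_fin n)

lemma TT_abs (h : CovK P k p) (ω : Fin n → X) : |TT P k p ω| ≤ n * p ^ 2 :=
  sum_abs_le_card (sq_nonneg p) fun j _ => DH_abs h _ _ j ω

lemma Tl_abs (h : CovK P k p) (l : Fin n) (ω : Fin n → X) : |Tl P k p l ω| ≤ n * p ^ 2 :=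
  sum_abs_le_card (sq_nonneg p) fun j _ => DH_abs h _ _ j ω

lemma Tl_update (l : Fin n) (ω : Fin n → X) (x : X) :
    Tl P k p l (Function.update ω l x) = Tl P k p l ω := by
  unfold Tl
  refine Finset.sum_congr rfl fun j hj => ?_
  have hjl := Finset.ne_of_mem_erase hj
  rw [HH_update (Finset.notMem_erase l _) hjl]
  unfold Dd
  rw [HH_update (Finset.notMem_erase l _) hjl, UU_update (Finset.notMem_erase l _)]

lemma RR_nonneg (h : CovK P k p) (l : Fin n) (ω : Fin n → X) : 0 ≤ RR P k l ω :=
  Finset.sum_nonneg fun j _ => cc_nonneg h _ _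

lemma TT_sub (h : CovK P k p) (l : Fin n) (ω : Fin n → X) :
    |TT P k p ω - Tl P k p l ω| ≤ p ^ 2 + n * p ^ 3 + 2 * p * RR P k l ω := by
  have hp := p_nonneg h
  have e : TT P k p ω - Tl P k p l ω =
      (∑ j ∈ Finset.univ.erase l, (Dd P k p (Finset.Iio j) j ω * HH P k (Finset.univ.erase j) j ω
        - Dd P k p ((Finset.Iio j).erase l) j ω * HH P k ((Finset.univ.erase j).erase l) j ω))
      + Dd P k p (Finset.Iio l) l ω * HH P k (Finset.univ.erase l) l ω := by
    unfold TT Tl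
    rw [Finset.sum_sub_distrib, ← Finset.sum_erase_add _ _ (Finset.mem_univ l)]
    ring
  have h1 : ∀ j, |Dd P k p (Finset.Iio j) j ω * HH P k (Finset.univ.erase j) j ω
        - Dd P k p ((Finset.Iio j).erase l) j ω * HH P k ((Finset.univ.erase j).erase l) j ω| ≤
        2 * p * cc P k (ω j) (ω l) + p ^ 3 := by
    intro j
    have a1 := Dd_erase h (Finset.Iio j) j l ω
    have a2 := HH_erase h (Finset.univ.erase j) j l ω
    have a3 := Dd_abs h ((Finset.Iio j).erase l) j ω
    have a4 := HH_le h (Finset.univ.erase j) j ω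
    have a5 := HH_nonneg h (Finset.univ.erase j) j ω
    generalize Dd P k p (Finset.Iio j) j ω = D at *
    generalize HH P k (Finset.univ.erase j) j ω = H at *
    generalize Dd P k p ((Finset.Iio j).erase l) j ω = D' at *
    generalize HH P k ((Finset.univ.erase j).erase l) j ω = H' at *
    have e2 : D * H - D' * H' = (D - D') * H + D' * (H - H') := by ring
    rw [e2]
    refine (abs_add_le _ _).trans ?_
    rw [abs_mul, abs_mul, abs_of_nonneg a5]
    have b1 := mul_le_mul a1 a4 a5 ((abs_nonneg _).trans a1)
    have b2 := mul_le_mul a3 a2 (abs_nonneg _) hp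
    linarith
  rw [e]
  refine (abs_add_le _ _).trans ?_
  have h2 := (Finset.abs_sum_le_sum_abs (fun j => (Dd P k p (Finset.Iio j) j ω *
      HH P k (Finset.univ.erase j) j ω
        - Dd P k p ((Finset.Iio j).erase l) j ω * HH P k ((Finset.univ.erase j).erase l) j ω))
      (Finset.univ.erase l)).trans (Finset.sum_le_sum fun j _ => h1 j)
  rw [Finset.sum_add_distrib, ← Finset.mul_sum, Finset.sum_const, nsmul_eq_mul] at h2
  have h3 := DH_abs h (Finset.Iio l) (Finset.univ.erase l) l ω
  have h4 : ((Finset.univ.erase l).card : ℝ) * p ^ 3 ≤ n * p ^ 3 := by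
    refine mul_le_mul_of_nonneg_right ?_ (by positivity)
    exact_mod_cast (Finset.card_le_univ _).trans_eq (Fintype.card_fin n)
  unfold RR
  linarith

lemma cc_ev_meas (h : CovK P k p) (i l : Fin n) :
    Measurable (fun ω : Fin n → X => cc P k (ω i) (ω l)) :=
  (cc_meas h).comp (g := fun z : X × X => cc P k z.1 z.2)
    (f := fun ω : Fin n → X => (ω i, ω l))
    ((measurable_pi_apply i).prodMk (measurable_pi_apply l))

lemma cc_abs (h : CovK P k p) (a b : X) : |cc P k a b| ≤ p := by
  rw [abs_of_nonneg (cc_nonneg h _ _)]; exact cc_le h _ _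

lemma cc_mean (h : CovK P k p) {i l : Fin n} (hil : i ≠ l) :
    ∫ ω, cc P k (ω i) (ω l) ∂(Measure.pi fun _ : Fin n => P) = p ^ 2 := by
  rw [integral_update P i (F := fun ω => cc P k (ω i) (ω l)) (cc_ev_meas h i l)
    (fun ω => cc_abs h _ _)]
  simp_rw [Function.update_self, Function.update_of_ne hil.symm, cc_int_l h]
  simp

lemma cc_cc_mean (h : CovK P k p) {i j l : Fin n} (hil : i ≠ l) (hjl : j ≠ l) :
    ∫ ω, cc P k (ω i) (ω l) * cc P k (ω j) (ω l) ∂(Measure.pi fun _ : Fin n => P) ≤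
      if i = j then p ^ 3 else p ^ 4 := by
  have hp := p_nonneg h
  have hb : ∀ ω : Fin n → X, |cc P k (ω i) (ω l) * cc P k (ω j) (ω l)| ≤ p * p := fun ω => by
    rw [abs_mul]; exact mul_le_mul (cc_abs h _ _) (cc_abs h _ _) (abs_nonneg _) hp
  have hm : Measurable fun ω : Fin n → X => cc P k (ω i) (ω l) * cc P k (ω j) (ω l) :=
    (cc_ev_meas h i l).mul (cc_ev_meas h j l)
  split_ifs with hij
  · subst hij
    have : p ^ 3 = ∫ ω, p * cc P k (ω i) (ω l) ∂(Measure.pi fun _ : Fin n => P) := by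
      rw [integral_const_mul, cc_mean h hil]; ring
    rw [this]
    refine integral_mono (bdd_int hm hb)
      ((bdd_int (cc_ev_meas h i l) fun ω => cc_abs h _ _).const_mul p) fun ω => ?_
    exact mul_le_mul_of_nonneg_right (cc_le h _ _) (cc_nonneg h _ _)
  · rw [integral_update P i hm hb]
    simp_rw [Function.update_self, Function.update_of_ne hil.symm,
      Function.update_of_ne (Ne.symm hij), integral_mul_const, cc_int_l h, integral_const_mul,
      cc_mean h hjl]
    exact le_of_eq (by ring)

lemma RR_meas (h : CovK P k p) (l : Fin n) : Measurable (RR P k l) := by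
  unfold RR
  exact Finset.measurable_sum _ fun j _ => cc_ev_meas h j l

lemma RR_abs (h : CovK P k p) (l : Fin n) (ω : Fin n → X) : |RR P k l ω| ≤ n * p :=
  sum_abs_le_card (p_nonneg h) fun j _ => cc_abs h _ _

lemma RR_sq (h : CovK P k p) (l : Fin n) :
    ∫ ω, RR P k l ω ^ 2 ∂(Measure.pi fun _ : Fin n => P) ≤ n ^ 2 * p ^ 4 + n * p ^ 3 := by
  have hp := p_nonneg h
  have e : ∀ ω : Fin n → X, RR P k l ω ^ 2 = ∑ i ∈ Finset.univ.erase l,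
      ∑ j ∈ Finset.univ.erase l, cc P k (ω i) (ω l) * cc P k (ω j) (ω l) := by
    intro ω; unfold RR; rw [sq, Finset.sum_mul_sum]
  have hi : ∀ i j : Fin n, Integrable (fun ω : Fin n → X => cc P k (ω i) (ω l) * cc P k (ω j) (ω l))
      (Measure.pi fun _ : Fin n => P) := fun i j =>
    bdd_int (K := p * p) ((cc_ev_meas h i l).mul (cc_ev_meas h j l)) fun ω => by
      rw [abs_mul]; exact mul_le_mul (cc_abs h _ _) (cc_abs h _ _) (abs_nonneg _) hp
  simp_rw [e]
  rw [integral_finsetSum _ fun i _ => integrable_finsetSum _ fun j _ => hi i j]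
  simp_rw [integral_finsetSum _ fun j _ => hi _ j]
  calc _ ≤ ∑ i ∈ Finset.univ.erase l, ∑ j ∈ Finset.univ.erase l,
          (p ^ 4 + if i = j then p ^ 3 else 0) := by
        refine Finset.sum_le_sum fun i hi' => Finset.sum_le_sum fun j hj' => ?_
        refine (cc_cc_mean h (Finset.ne_of_mem_erase hi') (Finset.ne_of_mem_erase hj')).trans ?_
        split_ifs
        · have : 0 ≤ p ^ 4 := by positivity
          linarith
        · simp
    _ ≤ ∑ i : Fin n, ∑ j : Fin n, (p ^ 4 + if i = j then p ^ 3 else 0) := by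
        have h0 : ∀ i j : Fin n, 0 ≤ (p ^ 4 + if i = j then p ^ 3 else 0) := by
          intro i j; split_ifs <;> positivity
        refine (Finset.sum_le_sum fun i _ => Finset.sum_le_sum_of_subset_of_nonneg
          (Finset.subset_univ _) fun j _ _ => h0 i j).trans
          (Finset.sum_le_sum_of_subset_of_nonneg (Finset.subset_univ _)
          fun i _ _ => Finset.sum_nonneg fun j _ => h0 i j)
    _ = _ := by
        simp_rw [Finset.sum_add_distrib, Finset.sum_ite_eq, Finset.sum_const]
        simp; ring

theorem TT_var (h : CovK P k p) :
    ∫ ω, (TT P k p ω - ∫ ω, TT P k p ω ∂(Measure.pi fun _ : Fin n => P)) ^ 2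
      ∂(Measure.pi fun _ : Fin n => P) ≤
      n * (2 * (p ^ 2 + n * p ^ 3) ^ 2 + 8 * p ^ 2 * (n ^ 2 * p ^ 4 + n * p ^ 3)) := by
  have hp := p_nonneg h
  refine (efron_stein P (n * p ^ 2) n (TT P k p) (TT_meas h) (TT_abs h) (Tl P k p)
    (Tl_meas h) (Tl_abs h) (fun l ω x => Tl_update l ω x)).trans ?_
  have : ∀ l : Fin n, ∫ ω, (TT P k p ω - Tl P k p l ω) ^ 2 ∂(Measure.pi fun _ : Fin n => P) ≤
      2 * (p ^ 2 + n * p ^ 3) ^ 2 + 8 * p ^ 2 * (n ^ 2 * p ^ 4 + n * p ^ 3) := by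
    intro l
    have hRi : Integrable (fun ω => RR P k l ω ^ 2) (Measure.pi fun _ : Fin n => P) :=
      bdd_int (K := (n * p) ^ 2) ((RR_meas h l).pow_const 2) fun ω => by
        rw [abs_pow]; exact pow_le_pow_left₀ (abs_nonneg _) (RR_abs h l ω) 2
    calc _ ≤ ∫ ω, (2 * (p ^ 2 + n * p ^ 3) ^ 2 + 8 * p ^ 2 * RR P k l ω ^ 2)
            ∂(Measure.pi fun _ : Fin n => P) := by
          refine integral_mono_of_nonneg (ae_of_all _ fun _ => sq_nonneg _)
            ((integrable_const _).add (hRi.const_mul _)) (ae_of_all _ fun ω => ?_)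
          have h1 := TT_sub h l ω
          have h2 := pow_le_pow_left₀ (abs_nonneg _) h1 2
          rw [sq_abs] at h2
          refine h2.trans ?_
          nlinarith [sq_nonneg ((p ^ 2 + n * p ^ 3) - 2 * p * RR P k l ω)]
      _ = 2 * (p ^ 2 + n * p ^ 3) ^ 2 +
          8 * p ^ 2 * ∫ ω, RR P k l ω ^ 2 ∂(Measure.pi fun _ : Fin n => P) := by
          rw [integral_add (integrable_const _) (hRi.const_mul _), integral_const_mul (8 * p ^ 2) (fun ω => RR P k l ω ^ 2)]
          simp
      _ ≤ _ := by
          have := mul_le_mul_of_nonneg_left (RR_sq h l) (by positivity : 0 ≤ 8 * p ^ 2)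
          linarith
  refine (Finset.sum_le_sum fun l _ => this l).trans (le_of_eq ?_)
  simp; ring

def vv {n : ℕ} (P : Measure X) (k : X → X → ℝ) (ω : Fin n → X) : ℝ := 1 - UU P k Finset.univ ω

lemma vv_meas (h : CovK P k p) : Measurable (vv (n := n) P k) := (UU_meas h _).const_sub 1

lemma vv_id (h : CovK P k p) {f : ℝ → ℝ} (hf : Measurable f) {K : ℝ}
    (hK : ∀ x, 0 ≤ x → x ≤ 1 → |f x| ≤ K) :
    ∫ ω, (vv P k ω - (1 - (1 - p) ^ n)) * f (vv P k ω) ∂(Measure.pi fun _ : Fin n => P) =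
    ∫ ω, ∑ j, Dd P k p (Finset.Iio j) j ω *
      (f (vv P k ω) - f (vv P k ω - HH P k (Finset.univ.erase j) j ω))
        ∂(Measure.pi fun _ : Fin n => P) := by
  have hp := p_nonneg h
  have e1 : ∀ (j : Fin n) (ω : Fin n → X), vv P k ω - HH P k (Finset.univ.erase j) j ω =
      1 - UU P k (Finset.univ.erase j) ω := by
    intro j ω; unfold vv; rw [UU_sub h j]; ring
  have hfU : ∀ (J : Finset (Fin n)) (ω : Fin n → X), |f (1 - UU P k J ω)| ≤ K := fun J ω =>
    hK _ (by linarith [UU_le h J ω]) (by linarith [UU_nonneg h J ω])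
  have hfm : ∀ (J : Finset (Fin n)), Measurable fun ω => f (1 - UU P k J ω) := fun J =>
    hf.comp ((UU_meas h J).const_sub 1)
  have hi : ∀ (j : Fin n) (J : Finset (Fin n)), Integrable
      (fun ω => Dd P k p (Finset.Iio j) j ω * f (1 - UU P k J ω))
      (Measure.pi fun _ : Fin n => P) := fun j J =>
    bdd_int (K := p * K) ((Dd_meas h _ j).mul (hfm J)) fun ω => by
      rw [abs_mul]; exact mul_le_mul (Dd_abs h _ j ω) (hfU J ω) (abs_nonneg _) hp
  have e2 : ∀ ω : Fin n → X, (vv P k ω - (1 - (1 - p) ^ n)) * f (vv P k ω) =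
      ∑ j, Dd P k p (Finset.Iio j) j ω * f (1 - UU P k Finset.univ ω) := by
    intro ω
    rw [← Finset.sum_mul, Dd_sum h]; unfold vv; ring_nf
  simp_rw [e1, e2, mul_sub, Finset.sum_sub_distrib]
  rw [integral_sub]
  · rw [integral_finsetSum (f := fun j ω => Dd P k p (Finset.Iio j) j ω *
      f (1 - UU P k (Finset.univ.erase j) ω)) _ fun j _ => hi j _]
    rw [Finset.sum_eq_zero (fun j _ => ?_), sub_zero]
    · rfl
    · exact Dd_zero h (by simp) (hfm _) (hfU _) fun ω x => by
        rw [UU_update (Finset.notMem_erase j _)]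
  · exact integrable_finsetSum _ fun j _ => hi j _
  · exact integrable_finsetSum _ fun j _ => hi j _

lemma vv_mean (h : CovK P k p) :
    ∫ ω, vv P k ω ∂(Measure.pi fun _ : Fin n => P) = 1 - (1 - p) ^ n := by
  have := vv_id (n := n) h (f := fun _ => 1) measurable_const (K := 1) (by simp)
  simp only [mul_one, sub_self, mul_zero, Finset.sum_const_zero, integral_zero] at this
  have hi : Integrable (vv (n := n) P k) (Measure.pi fun _ : Fin n => P) :=
    bdd_int (K := 1) (vv_meas h) fun ω => by
      unfold vv; rw [abs_le]; constructor <;> linarith [UU_le h Finset.univ ω, UU_nonneg h Finset.univ ω]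
  rw [integral_sub hi (integrable_const _)] at this
  simp at this
  linarith

lemma TT_mean (h : CovK P k p) :
    ∫ ω, TT P k p ω ∂(Measure.pi fun _ : Fin n => P) =
      ∫ ω, (vv P k ω - (1 - (1 - p) ^ n)) ^ 2 ∂(Measure.pi fun _ : Fin n => P) := by
  have := vv_id (n := n) h (f := fun x => x - (1 - (1 - p) ^ n)) (measurable_id.sub_const _) (K := 1)
    (fun x h0 h1 => by
      have a := w_nonneg h n
      have b := w_le_one h n
      rw [abs_le]; constructor <;> linarith)
  simp_rw [sq]
  rw [this]
  simp [TT]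

theorem abstract_kol (h : CovK P k p) (hp0 : 0 < p) (hn : 0 < n) {s2 : ℝ}
    (hs : s2 = ∫ ω, (vv P k ω - (1 - (1 - p) ^ n)) ^ 2 ∂(Measure.pi fun _ : Fin n => P))
    (hs0 : 0 < s2) :
    ⨆ t : ℝ, |(Measure.pi fun _ : Fin n => P).real
        {ω | (vv P k ω - (1 - (1 - p) ^ n)) / √s2 ≤ t} - stdGaussCDF t| ≤
      (√(0.4 * ((1 - (1 - p) ^ n) / √s2 * (p / √s2) ^ 2)) +
        √(2 * ((1 - (1 - p) ^ n) / √s2 * (p / √s2) ^ 2) +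
          √(n * (2 * (p ^ 2 + n * p ^ 3) ^ 2 + 8 * p ^ 2 * (n ^ 2 * p ^ 4 + n * p ^ 3))) / s2)) ^ 2 := by
  set Q := Measure.pi fun _ : Fin n => P with hQ
  have hr : 0 < √s2 := Real.sqrt_pos.2 hs0
  have hsq : √s2 ^ 2 = s2 := Real.sq_sqrt hs0.le
  set m := 1 - (1 - p) ^ n with hm
  have hm0 : 0 < m := by
    rw [hm, sub_pos]
    exact pow_lt_one₀ (sub_nonneg.2 (p_le_one h)) (by linarith) hn.ne'
  have hWm : Measurable fun ω : Fin n → X => (vv P k ω - m) / √s2 :=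
    ((vv_meas h).sub_const _).div_const _
  have hvb : ∀ ω : Fin n → X, |vv P k ω - m| ≤ 1 := fun ω => by
    have a := w_nonneg h n
    have b := w_le_one h n
    have := UU_le h Finset.univ ω
    have := UU_nonneg h Finset.univ ω
    unfold vv
    rw [abs_le]; constructor <;> linarith
  have hWC : ∀ ω : Fin n → X, |(vv P k ω - m) / √s2| ≤ 1 / √s2 := fun ω => by
    rw [abs_div, abs_of_pos hr]
    exact div_le_div_of_nonneg_right (hvb ω) hr.le
  refine stein_kol Q (W := fun ω => (vv P k ω - m) / √s2) hWm hWC ?_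
    (a := fun j ω => Dd P k p (Finset.Iio j) j ω / √s2)
    (g := fun j ω => HH P k (Finset.univ.erase j) j ω / √s2)
    (fun j => (Dd_meas h _ j).div_const _) (fun j => (HH_meas h _ j).div_const _)
    (fun j ω => div_nonneg (HH_nonneg h _ j ω) hr.le)
    (fun j ω => div_le_div_of_nonneg_right (HH_le h _ j ω) hr.le)
    (div_pos hp0 hr) (div_pos hm0 hr) ?_ ?_ ?_
  · have := sq_int_le (Q := Q) (F := fun ω => |(vv P k ω - m) / √s2|)
      (measurable_abs.comp hWm) (K := 1 / √s2) (fun ω => by rw [abs_abs]; exact hWC ω)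
    simp only [sq_abs, div_pow, hsq] at this
    rw [integral_div, ← hs, div_self hs0.ne'] at this
    exact (abs_le_one_iff_mul_self_le_one.2 (by nlinarith) : _) |> (le_abs_self _).trans
  · intro ω
    simp_rw [abs_div, abs_of_pos hr, ← Finset.sum_div]
    exact div_le_div_of_nonneg_right (Dd_sum_abs h ω) hr.le
  · have e : ∀ ω : Fin n → X, |1 - ∑ j, Dd P k p (Finset.Iio j) j ω / √s2 *
        (HH P k (Finset.univ.erase j) j ω / √s2)| = |TT P k p ω - s2| / s2 := by
      intro ω
      have : ∑ j, Dd P k p (Finset.Iio j) j ω / √s2 *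
        (HH P k (Finset.univ.erase j) j ω / √s2) = TT P k p ω / s2 := by
        unfold TT
        rw [Finset.sum_div]
        refine Finset.sum_congr rfl fun j _ => ?_
        rw [div_mul_div_comm, ← sq, hsq]
      rw [this, ← abs_of_pos hs0, ← abs_div, abs_sub_comm, abs_of_pos hs0]
      congr 1
      field_simp
    simp_rw [e]
    rw [integral_div]
    refine div_le_div_of_nonneg_right ?_ hs0.le
    have hv := TT_var (n := n) h
    rw [TT_mean h, ← hm, ← hs] at hv
    refine Real.le_sqrt_of_sq_le ?_
    refine le_trans ?_ hv
    have := sq_int_le (Q := Q) (F := fun ω => |TT P k p ω - s2|)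
      (measurable_abs.comp ((TT_meas h).sub_const _)) (K := n * p ^ 2 + s2) (fun ω => by
        rw [abs_abs]
        refine (abs_sub _ _).trans ?_
        rw [abs_of_pos hs0]
        linarith [TT_abs h ω])
    simpa only [sq_abs] using this
  · intro f hf hfb
    have := vv_id (n := n) h (f := fun x => f ((x - m) / √s2))
      (hf.measurable.comp ((measurable_id.sub_const _).div_const _)) (K := 1.4) (fun x _ _ => hfb _)
    have e1 : ∀ ω : Fin n → X, (vv P k ω - m) / √s2 * f ((vv P k ω - m) / √s2) =
      ((vv P k ω - m) * f ((vv P k ω - m) / √s2)) / √s2 := fun ω => by ring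
    have e2 : ∀ ω : Fin n → X, ∑ j, Dd P k p (Finset.Iio j) j ω / √s2 *
        (f ((vv P k ω - m) / √s2) -
          f ((vv P k ω - m) / √s2 - HH P k (Finset.univ.erase j) j ω / √s2)) =
        (∑ j, Dd P k p (Finset.Iio j) j ω *
        (f ((vv P k ω - m) / √s2) -
          f ((vv P k ω - HH P k (Finset.univ.erase j) j ω - m) / √s2))) / √s2 := fun ω => by
      rw [Finset.sum_div]
      refine Finset.sum_congr rfl fun j _ => ?_
      rw [← sub_div, sub_right_comm]
      ring
    simp_rw [e1, e2]
    rw [integral_div, integral_div, this]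

/-- variance formula -/
theorem vv_var (h : CovK P k p) (hsym : ∀ x y, k x y = k y x) :
    ∫ ω, (vv P k ω - (1 - (1 - p) ^ n)) ^ 2 ∂(Measure.pi fun _ : Fin n => P) =
      ∫ y, ∫ z, (1 - 2 * p + cc P k y z) ^ n ∂P ∂P - (1 - p) ^ (2 * n) := by
  set Q := Measure.pi fun _ : Fin n => P with hQ
  have hU2 : ∫ ω, UU P k (Finset.univ : Finset (Fin n)) ω ^ 2 ∂Q =
      ∫ y, ∫ z, (1 - 2 * p + cc P k y z) ^ n ∂P ∂P := by
    have e : ∀ ω : Fin n → X, UU P k Finset.univ ω ^ 2 =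
        ∫ z : X × X, unc k Finset.univ ω z.1 * unc k Finset.univ ω z.2 ∂(P.prod P) := by
      intro ω
      rw [integral_prod_mul (fun y => unc k Finset.univ ω y) (fun y => unc k Finset.univ ω y), sq]
      rfl
    simp_rw [e]
    have hm : Measurable (Function.uncurry fun (ω : Fin n → X) (z : X × X) =>
        unc k Finset.univ ω z.1 * unc k Finset.univ ω z.2) := by
      refine Measurable.mul ?_ ?_
      · exact (unc_meas h Finset.univ).comp
          (f := fun w : (Fin n → X) × (X × X) => (w.1, w.2.1)) (by fun_prop)
      · exact (unc_meas h Finset.univ).comp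
          (f := fun w : (Fin n → X) × (X × X) => (w.1, w.2.2)) (by fun_prop)
    rw [integral_integral_swap (bdd_int (K := 1) hm fun w => mul_abs_le_one (unc_abs h _ _ _)
      (unc_abs h _ _ _))]
    have e3 : ∀ z : X × X, ∫ ω, unc k Finset.univ ω z.1 * unc k Finset.univ ω z.2 ∂Q =
        (1 - 2 * p + cc P k z.1 z.2) ^ n := by
      intro z
      unfold unc
      simp_rw [← Finset.prod_mul_distrib]
      have := integral_fintype_prod_eq_pow (ι := Fin n) (μ := P)
        (fun x => (1 - k x z.1) * (1 - k x z.2))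
      rw [this, Fintype.card_fin]
      congr 1
      have e4 : ∀ x, (1 - k x z.1) * (1 - k x z.2) = (1 - k x z.1 - k x z.2) + k z.1 x * k z.2 x := by
        intro x; rw [hsym z.1 x, hsym z.2 x]; ring
      simp_rw [e4]
      have i1 : ∀ y, Integrable (fun x => k x y) P := fun y =>
        bdd_int (kmeas_r h y) fun x => k_abs h x y
      have i2 : Integrable (fun x => 1 - k x z.1) P := (integrable_const _).sub (i1 _)
      have i3 : Integrable (fun x => 1 - k x z.1 - k x z.2) P := i2.sub (i1 _)
      rw [integral_add i3 (kk_int h _ _), integral_sub i2 (i1 _),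
        integral_sub (integrable_const _) (i1 _), h.intl, h.intl]
      simp [cc]; ring
    simp_rw [e3]
    rw [integral_prod]
    refine bdd_int (K := 1) (((cc_meas h).const_add _).pow_const n) fun z => ?_
    rw [← e3]
    exact abs_int_le fun ω => mul_abs_le_one (unc_abs h _ _ _) (unc_abs h _ _ _)
  have hb : ∀ ω : Fin n → X, |UU P k Finset.univ ω| ≤ 1 := fun ω => by
    rw [abs_of_nonneg (UU_nonneg h _ _)]; exact UU_le h _ _
  have hUm : ∫ ω, UU P k (Finset.univ : Finset (Fin n)) ω ∂Q = (1 - p) ^ n := by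
    have := vv_mean (n := n) h
    unfold vv at this
    rw [integral_sub (integrable_const _) (bdd_int (UU_meas h _) hb)] at this
    simp at this; exact this
  have h2 := var_shift (Q := Q) (UU_meas h Finset.univ) hb 0
  simp only [sub_zero, hU2, hUm] at h2
  have e : ∀ ω : Fin n → X, (vv P k ω - (1 - (1 - p) ^ n)) ^ 2 =
    (UU P k Finset.univ ω - (1 - p) ^ n) ^ 2 := fun ω => by unfold vv; ring
  simp_rw [e]
  rw [h2]; ring

end

end

section

def wr (L t : ℝ) : ℝ := t - L * round (t / L)

lemma wr_meas (L : ℝ) : Measurable (wr L) := by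
  unfold wr
  have h : Measurable (fun t : ℝ => ((round (t / L) : ℤ) : ℝ)) := by
    simp_rw [round_eq]
    exact (measurable_from_top (f := fun z : ℤ => (z : ℝ))).comp
      (Int.measurable_floor.comp ((measurable_id.div_const L).add_const _))
  exact measurable_id.sub (h.const_mul L)

lemma wr_eq {L : ℝ} (hL : 0 < L) (t : ℝ) : wr L t = L * (t / L - round (t / L)) := by
  unfold wr; rw [mul_sub, mul_div_cancel₀ _ hL.ne']

lemma wr_mem {L : ℝ} (hL : 0 < L) (t : ℝ) : wr L t ∈ Ico (-(L / 2)) (L / 2) := by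
  rw [wr_eq hL, round_eq]
  have h1 := Int.floor_le (t / L + 1 / 2)
  have h2 := Int.lt_floor_add_one (t / L + 1 / 2)
  constructor <;> nlinarith

lemma wr_add {L : ℝ} (hL : 0 < L) (t : ℝ) (m : ℤ) : wr L (t + m * L) = wr L t := by
  unfold wr
  have : (t + m * L) / L = t / L + m := by field_simp
  rw [this, round_add_intCast]; push_cast; ring

lemma wr_id {L : ℝ} (hL : 0 < L) {t : ℝ} (ht : t ∈ Ico (-(L / 2)) (L / 2)) : wr L t = t := by
  unfold wr
  have : round (t / L) = 0 := by
    rw [round_eq, Int.floor_eq_iff]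
    have e : t / L * L = t := div_mul_cancel₀ _ hL.ne'
    have := ht.1; have := ht.2
    constructor <;> push_cast <;> nlinarith
  rw [this]; simp

lemma wr_inf {L : ℝ} (hL : 0 < L) (t : ℝ) : ⨅ k : ℤ, |t - k * L| = |wr L t| := by
  have hb : BddBelow (range fun k : ℤ => |t - k * L|) := ⟨0, by rintro _ ⟨k, rfl⟩; exact abs_nonneg _⟩
  refine le_antisymm ?_ (le_ciInf fun k => ?_)
  · refine (ciInf_le hb (round (t / L))).trans (le_of_eq ?_)
    unfold wr; rw [mul_comm]
  · rw [wr_eq hL, abs_mul, abs_of_pos hL]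
    have := mul_le_mul_of_nonneg_left (round_le (t / L) k) hL.le
    refine this.trans (le_of_eq ?_)
    rw [← abs_of_pos hL, ← abs_mul, abs_of_pos hL, mul_sub, mul_div_cancel₀ _ hL.ne', mul_comm L]

lemma wr_inf' {L : ℝ} (hL : 0 < L) (a b : ℝ) : ⨅ k : ℤ, |a - b - k * L| = |wr L (b - a)| := by
  rw [← wr_inf hL, ← (Equiv.neg ℤ).iInf_comp]
  refine iInf_congr fun k => ?_
  rw [← abs_neg]
  congr 1
  simp; ring

lemma wr_mp1 {L : ℝ} (hL : 0 < L) (x : ℝ) :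
    MeasurePreserving (fun y => wr L (y - x)) (volume.restrict (Ico 0 L))
      (volume.restrict (Ico (-(L / 2)) (L / 2))) := by
  have hm : Measurable fun y => wr L (y - x) := (wr_meas L).comp (measurable_id.sub_const x)
  refine ⟨hm, ?_⟩
  ext s hs
  rw [Measure.map_apply hm hs, Measure.restrict_apply (hm hs), Measure.restrict_apply hs]
  have h1 : volume ((fun y => wr L (y - x)) ⁻¹' s ∩ Ico 0 L) =
      volume ((fun y => wr L (y - x)) ⁻¹' s ∩ Ioc 0 (0 + L)) := by
    rw [zero_add]
    exact measure_congr ((ae_eq_refl _).inter Ico_ae_eq_Ioc)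
  have h2 : volume ((fun y => wr L (y - x)) ⁻¹' s ∩ Ioc (x - L / 2) (x - L / 2 + L)) =
      volume ((fun y => wr L (y - x)) ⁻¹' s ∩ Ico (x - L / 2) (x - L / 2 + L)) :=
    measure_congr ((ae_eq_refl _).inter Ico_ae_eq_Ioc.symm)
  rw [h1, (isAddFundamentalDomain_Ioc hL 0 volume).measure_set_eq
    (isAddFundamentalDomain_Ioc hL (x - L / 2) volume)
    (hm hs), h2]
  · have : (fun y => wr L (y - x)) ⁻¹' s ∩ Ico (x - L / 2) (x - L / 2 + L) =
        (fun y => y - x) ⁻¹' (s ∩ Ico (-(L / 2)) (L / 2)) := by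
      ext y
      simp only [mem_inter_iff, mem_preimage]
      have hy : y ∈ Ico (x - L / 2) (x - L / 2 + L) ↔ y - x ∈ Ico (-(L / 2)) (L / 2) := by
        simp only [mem_Ico]; constructor <;> rintro ⟨a, b⟩ <;> constructor <;> linarith
      rw [hy]
      refine and_congr_left fun h => ?_
      rw [wr_id hL h]
    rw [this]
    simp_rw [sub_eq_add_neg]
    rw [measure_preimage_add_right]
  · rintro ⟨g, hg⟩
    obtain ⟨m, rfl⟩ := AddSubgroup.mem_zmultiples_iff.1 hg
    ext y
    simp only [mem_preimage]
    have : ((⟨m • L, hg⟩ : AddSubgroup.zmultiples L) +ᵥ y) - x = y - x + m * L := by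
      rw [AddSubgroup.vadd_def]; simp; ring
    rw [this, wr_add hL]

/-- Euclidean wrapped difference. -/
def wv {d : ℕ} (L : ℝ) (x y : Fin d → ℝ) : EuclideanSpace ℝ (Fin d) :=
  WithLp.toLp 2 fun i => wr L (y i - x i)

def cbox (d : ℕ) (L : ℝ) : Set (EuclideanSpace ℝ (Fin d)) :=
  {w | ∀ i, w i ∈ Ico (-(L / 2)) (L / 2)}

lemma cbox_meas (d : ℕ) (L : ℝ) : MeasurableSet (cbox d L) := by
  have : cbox d L = ⋂ i, (fun w : EuclideanSpace ℝ (Fin d) => w i) ⁻¹' Ico (-(L / 2)) (L / 2) := by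
    ext; simp [cbox]
  rw [this]
  refine MeasurableSet.iInter fun i => ?_
  exact (by fun_prop : Measurable fun w : EuclideanSpace ℝ (Fin d) => w i) measurableSet_Ico

lemma box_meas (d : ℕ) (L : ℝ) : MeasurableSet (box d L) :=
  MeasurableSet.univ_pi fun _ => measurableSet_Ico

lemma wv_mp {d : ℕ} {L : ℝ} (hL : 0 < L) (x : Fin d → ℝ) :
    MeasurePreserving (wv L x) (volume.restrict (box d L)) (volume.restrict (cbox d L)) := by
  have h1 : MeasurePreserving (fun (y : Fin d → ℝ) i => wr L (y i - x i))
      (volume.restrict (box d L))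
      (volume.restrict (Set.univ.pi fun _ : Fin d => Ico (-(L / 2)) (L / 2))) := by
    unfold box
    rw [volume_pi, Measure.restrict_pi_pi, Measure.restrict_pi_pi]
    exact measurePreserving_pi _ _ fun i => wr_mp1 hL (x i)
  have h2 := (PiLp.volume_preserving_ofLp (Fin d)).restrict_preimage
    (MeasurableSet.univ_pi fun _ : Fin d => measurableSet_Ico (a := -(L / 2)) (b := L / 2))
  have h3 : (WithLp.ofLp : EuclideanSpace ℝ (Fin d) → Fin d → ℝ) ⁻¹'
      (Set.univ.pi fun _ : Fin d => Ico (-(L / 2)) (L / 2)) = cbox d L := by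
    ext; simp [cbox, Set.mem_pi]
  have h4 := (PiLp.volume_preserving_toLp (Fin d)).restrict_preimage (cbox_meas d L)
  have h5 : (WithLp.toLp 2 : (Fin d → ℝ) → EuclideanSpace ℝ (Fin d)) ⁻¹' cbox d L =
      Set.univ.pi fun _ : Fin d => Ico (-(L / 2)) (L / 2) := by
    ext; simp [cbox, Set.mem_pi]
  rw [h5] at h4
  exact h4.comp h1

lemma wv_mem {d : ℕ} {L : ℝ} (hL : 0 < L) (x y : Fin d → ℝ) : wv L x y ∈ cbox d L :=
  fun _ => wr_mem hL _

lemma torDist_eq {d : ℕ} {L : ℝ} (hL : 0 < L) (x y : Fin d → ℝ) :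
    torDist L x y = ‖wv L x y‖ := by
  unfold torDist
  rw [EuclideanSpace.norm_eq]
  congr 1
  refine Finset.sum_congr rfl fun i _ => ?_
  rw [wr_inf' hL]; simp [wv]

lemma torDist_comm' {d : ℕ} {L : ℝ} (x y : Fin d → ℝ) :
    torDist L x y = torDist L y x := by
  unfold torDist
  congr 1
  refine Finset.sum_congr rfl fun i _ => ?_
  rw [← (Equiv.neg ℤ).iInf_comp]
  congr 1
  refine iInf_congr fun k => ?_
  rw [← abs_neg]
  congr 1
  simp; ring

lemma wv_meas {d : ℕ} (L : ℝ) :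
    Measurable fun z : (Fin d → ℝ) × (Fin d → ℝ) => wv L z.1 z.2 := by
  unfold wv
  refine (PiLp.volume_preserving_toLp (Fin d)).measurable.comp ?_
  rw [measurable_pi_iff]
  intro i
  exact (wr_meas L).comp (by fun_prop)

lemma torDist_meas {d : ℕ} {L : ℝ} (hL : 0 < L) :
    Measurable fun z : (Fin d → ℝ) × (Fin d → ℝ) => torDist L z.1 z.2 := by
  simp_rw [torDist_eq hL]
  exact (wv_meas L).norm

lemma torDist_meas_l {d : ℕ} {L : ℝ} (hL : 0 < L) (x : Fin d → ℝ) :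
    Measurable fun y : Fin d → ℝ => torDist L x y := by
  have := (torDist_meas (d := d) hL).comp (measurable_prodMk_left (x := x))
  exact this

/-- coverage kernel -/
def kk {d : ℕ} (L ρ : ℝ) (x y : Fin d → ℝ) : ℝ := if torDist L x y ≤ ρ then 1 else 0

lemma kk_meas {d : ℕ} {L : ℝ} (hL : 0 < L) (ρ : ℝ) :
    Measurable (Function.uncurry (kk (d := d) L ρ)) :=
  Measurable.ite (measurableSet_le (torDist_meas hL) measurable_const) measurable_const
    measurable_const

lemma kk_comm {d : ℕ} {L : ℝ} (ρ : ℝ) (x y : Fin d → ℝ) :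
    kk L ρ x y = kk L ρ y x := by
  unfold kk; rw [torDist_comm']

lemma kk_01 {d : ℕ} {L : ℝ} (ρ : ℝ) (x y : Fin d → ℝ) : 0 ≤ kk L ρ x y ∧ kk L ρ x y ≤ 1 := by
  unfold kk; split_ifs <;> simp

lemma ball_sub_cbox {d : ℕ} {L ρ : ℝ} (hρ : 2 * ρ < L) :
    closedBall (0 : EuclideanSpace ℝ (Fin d)) ρ ⊆ cbox d L := by
  intro w hw i
  rw [mem_closedBall_zero_iff] at hw
  have := (PiLp.norm_apply_le w i).trans hw
  rw [Real.norm_eq_abs, abs_le] at this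
  constructor <;> linarith

lemma sideLen_pow {d : ℕ} (hd : 1 ≤ d) (n : ℕ) : sideLen d n ^ d = n := by
  unfold sideLen
  exact Real.rpow_inv_natCast_pow (Nat.cast_nonneg n) (by omega)

lemma sideLen_pos {d : ℕ} {n : ℕ} (hn : 0 < n) : 0 < sideLen d n :=
  Real.rpow_pos_of_pos (by exact_mod_cast hn) _

lemma sideLen_tendsto {d : ℕ} (hd : 1 ≤ d) : Tendsto (fun n => sideLen d n) atTop atTop := by
  unfold sideLen
  exact (tendsto_rpow_atTop (by positivity)).comp tendsto_natCast_atTop_atTop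

lemma box_vol {d : ℕ} (hd : 1 ≤ d) {n : ℕ} (hn : 0 < n) : volume (box d (sideLen d n)) = n := by
  unfold box
  rw [volume_pi, Measure.pi_pi]
  simp only [Real.volume_Ico, sub_zero, Finset.prod_const, Finset.card_univ, Fintype.card_fin]
  rw [← ENNReal.ofReal_pow (sideLen_pos hn).le, sideLen_pow hd]; simp

lemma uniformBox_eq {d : ℕ} (hd : 1 ≤ d) (n : ℕ) : uniformBox d (sideLen d n) =
    ((n : ℝ≥0)⁻¹ : ℝ≥0) • volume.restrict (box d (sideLen d n)) := by
  unfold uniformBox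
  congr 2
  have h0 : 0 ≤ sideLen d n := Real.rpow_nonneg (Nat.cast_nonneg n) _
  rw [← Real.toNNReal_pow h0, sideLen_pow hd]
  simp

lemma uniformBox_prob {d : ℕ} (hd : 1 ≤ d) {n : ℕ} (hn : 0 < n) :
    IsProbabilityMeasure (uniformBox d (sideLen d n)) := by
  constructor
  rw [uniformBox_eq hd, Measure.smul_apply, Measure.restrict_apply_univ, box_vol hd hn]
  rw [ENNReal.smul_def, smul_eq_mul, ENNReal.coe_inv (by exact_mod_cast hn.ne')]
  exact ENNReal.inv_mul_cancel (by exact_mod_cast hn.ne') (by simp)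

lemma uniformBox_integral {d : ℕ} (hd : 1 ≤ d) (n : ℕ) (f : (Fin d → ℝ) → ℝ) :
    ∫ y, f y ∂(uniformBox d (sideLen d n)) = (∫ y in box d (sideLen d n), f y) / n := by
  rw [uniformBox_eq hd, integral_smul_nnreal_measure]
  simp [NNReal.smul_def]; ring

lemma box_integral {d : ℕ} {L : ℝ} (hL : 0 < L) (x : Fin d → ℝ)
    {F : EuclideanSpace ℝ (Fin d) → ℝ} (hF : Measurable F) :
    ∫ y in box d L, F (wv L x y) = ∫ w in cbox d L, F w := by
  have h := wv_mp hL x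
  rw [← h.map_eq, integral_map h.measurable.aemeasurable hF.aestronglyMeasurable]

lemma phi_eq (d : ℕ) {ρ : ℝ} (hρ : 0 < ρ) :
    phi d ρ = volume.real (closedBall (0 : EuclideanSpace ℝ (Fin d)) ρ) := by
  unfold phi unitBallVol Measure.real
  rw [Measure.addHaar_closedBall' _ _ hρ.le, ENNReal.toReal_mul, ENNReal.toReal_ofReal (by positivity)]
  simp [mul_comm]

lemma phi_pos (d : ℕ) {ρ : ℝ} (hρ : 0 < ρ) : 0 < phi d ρ := by
  unfold phi unitBallVol
  exact mul_pos (ENNReal.toReal_pos (measure_closedBall_pos _ _ one_pos).ne'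
    measure_closedBall_lt_top.ne) (by positivity)

lemma kk_int_box {d : ℕ} {L ρ : ℝ} (hρ : 0 < ρ) (hL : 2 * ρ < L) (x : Fin d → ℝ) :
    ∫ y in box d L, kk L ρ x y = phi d ρ := by
  have hL0 : 0 < L := by linarith
  have e : ∀ y, kk L ρ x y =
      (closedBall (0 : EuclideanSpace ℝ (Fin d)) ρ).indicator (fun _ => (1 : ℝ)) (wv L x y) := by
    intro y; unfold kk
    rw [torDist_eq hL0]; simp [indicator, mem_closedBall_zero_iff]
  simp_rw [e]
  rw [box_integral hL0 x (F := (closedBall (0 : EuclideanSpace ℝ (Fin d)) ρ).indicator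
    (fun _ => (1 : ℝ))) (measurable_const.indicator measurableSet_closedBall),
    setIntegral_indicator measurableSet_closedBall, inter_eq_right.2 (ball_sub_cbox hL), phi_eq d hρ]
  simp

lemma kk_cov {d : ℕ} (hd : 1 ≤ d) {n : ℕ} (hn : 0 < n) {ρ : ℝ} (hρ : 0 < ρ)
    (hL : 2 * ρ < sideLen d n) :
    CovK (uniformBox d (sideLen d n)) (kk (sideLen d n) ρ) (phi d ρ / n) where
  meas := kk_meas (sideLen_pos hn) ρ
  nn x y := (kk_01 ρ x y).1
  le1 x y := (kk_01 ρ x y).2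
  intr x := by rw [uniformBox_integral hd, kk_int_box hρ hL]
  intl y := by simp_rw [kk_comm ρ _ y]; rw [uniformBox_integral hd, kk_int_box hρ hL]

/-- lens volume -/
def lens (d : ℕ) (ρ : ℝ) (w : EuclideanSpace ℝ (Fin d)) : ℝ :=
  volume.real (closedBall (0 : EuclideanSpace ℝ (Fin d)) ρ ∩ closedBall w ρ)

lemma wrap_iff {d : ℕ} {L ρ : ℝ} (hρ : 0 < ρ) (hL : 4 * ρ < L) (x y u : Fin d → ℝ)
    (hu : ‖wv L x u‖ ≤ ρ) : ‖wv L y u‖ ≤ ρ ↔ ‖wv L x u - wv L x y‖ ≤ ρ := by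
  have hL0 : 0 < L := by linarith
  have key : (‖wv L y u‖ ≤ ρ ∨ ‖wv L x u - wv L x y‖ ≤ ρ) → wv L y u = wv L x u - wv L x y := by
    intro h
    ext i
    obtain ⟨m, hm⟩ : ∃ m : ℤ, wr L (u i - y i) = wr L (u i - x i) - wr L (y i - x i) + m * L := by
      refine ⟨-round ((u i - y i) / L) + round ((u i - x i) / L) - round ((y i - x i) / L), ?_⟩
      unfold wr; push_cast; ring
    have h1 := wr_mem hL0 (u i - y i)
    have h2 := wr_mem hL0 (y i - x i)
    have h3 := (PiLp.norm_apply_le (wv L x u) i).trans hu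
    simp only [wv, Real.norm_eq_abs, abs_le] at h3
    show wr L (u i - y i) = wr L (u i - x i) - wr L (y i - x i)
    have h4 : |wr L (u i - y i)| ≤ ρ ∨ |wr L (u i - x i) - wr L (y i - x i)| ≤ ρ := by
      rcases h with h | h
      · exact Or.inl ((PiLp.norm_apply_le (wv L y u) i).trans h)
      · exact Or.inr ((PiLp.norm_apply_le (wv L x u - wv L x y) i).trans h)
    have h5 : |(m : ℝ) * L| < L := by
      rw [abs_lt]
      simp only [mem_Ico] at h1 h2
      rcases h4 with h4 | h4 <;> rw [abs_le] at h4 <;> constructor <;> linarith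
    have h6 : m = 0 := by
      rw [abs_mul, abs_of_pos hL0] at h5
      have : |(m : ℝ)| < 1 := by nlinarith
      have : |m| < 1 := by exact_mod_cast this
      exact Int.abs_lt_one_iff.1 this
    rw [hm, h6]; simp
  constructor
  · intro h; rw [← key (Or.inl h)]; exact h
  · intro h; rw [key (Or.inr h)]; exact h

lemma cc_eq {d : ℕ} (hd : 1 ≤ d) {n : ℕ} {ρ : ℝ} (hρ : 0 < ρ)
    (hL : 4 * ρ < sideLen d n) (x y : Fin d → ℝ) :
    cc (uniformBox d (sideLen d n)) (kk (sideLen d n) ρ) x y =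
      lens d ρ (wv (sideLen d n) x y) / n := by
  unfold cc
  rw [uniformBox_integral hd]
  congr 1
  set L := sideLen d n
  have hL0 : 0 < L := by linarith
  set S := closedBall (0 : EuclideanSpace ℝ (Fin d)) ρ ∩ closedBall (wv L x y) ρ with hS
  have hSm : MeasurableSet S := measurableSet_closedBall.inter measurableSet_closedBall
  have e : ∀ u, kk L ρ x u * kk L ρ y u = S.indicator (fun _ => (1 : ℝ)) (wv L x u) := by
    intro u; unfold kk
    rw [torDist_eq hL0, torDist_eq hL0]
    by_cases hu : ‖wv L x u‖ ≤ ρ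
    · have := wrap_iff hρ hL x y u hu
      simp only [indicator, hS, mem_inter_iff, mem_closedBall_zero_iff, mem_closedBall, dist_eq_norm,
        ← this]
      by_cases h2 : ‖wv L y u‖ ≤ ρ <;> simp [hu, h2]
    · simp [indicator, hS, mem_closedBall_zero_iff, hu]
  simp_rw [e]
  rw [box_integral hL0 x (F := S.indicator (fun _ => (1 : ℝ))) (measurable_const.indicator hSm),
    setIntegral_indicator hSm, inter_eq_right.2
      (inter_subset_left.trans (ball_sub_cbox (by linarith : 2 * ρ < L)))]
  simp [lens, hS]

lemma coveredVol_eq {d : ℕ} (hd : 1 ≤ d) {n : ℕ} (hn : 0 < n) {ρ : ℝ} (ω : Fin n → Fin d → ℝ) :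
    coveredVol d n ρ ω = n * vv (uniformBox d (sideLen d n)) (kk (sideLen d n) ρ) ω := by
  have hp := uniformBox_prob hd hn
  set L := sideLen d n with hLd
  have hL0 : 0 < L := sideLen_pos hn
  set S : Set (Fin d → ℝ) := {y | ∃ i, torDist L (ω i) y ≤ ρ} with hS
  have hSm : MeasurableSet S := by
    have : S = ⋃ i, {y | torDist L (ω i) y ≤ ρ} := by ext; simp [hS]
    rw [this]
    refine MeasurableSet.iUnion fun i => ?_
    have hm : Measurable fun y : Fin d → ℝ => torDist L (ω i) y :=
      torDist_meas_l hL0 (ω i)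
    exact measurableSet_le hm measurable_const
  have e1 : (⋃ i, torBall L (ω i) ρ) = S ∩ box d L := by
    ext y; simp [torBall, hS, and_comm]
  have e2 : ∀ y, unc (kk L ρ) Finset.univ ω y = 1 - S.indicator (fun _ => (1 : ℝ)) y := by
    intro y
    unfold unc
    by_cases hy : y ∈ S
    · rw [indicator_of_mem hy, sub_self]
      obtain ⟨i, hi⟩ := hy
      exact Finset.prod_eq_zero (Finset.mem_univ i) (by simp [kk, hi])
    · rw [indicator_of_notMem hy, sub_zero]
      refine Finset.prod_eq_one fun i _ => ?_
      have : ¬ torDist L (ω i) y ≤ ρ := fun h => hy ⟨i, h⟩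
      simp [kk, this]
  have e3 : vv (uniformBox d L) (kk L ρ) ω = (volume.real (S ∩ box d L)) / n := by
    unfold vv UU
    simp_rw [e2]
    rw [integral_sub (integrable_const _) ((integrable_const _).indicator hSm)]
    rw [uniformBox_integral hd n (S.indicator fun _ => (1 : ℝ)), ← hLd, setIntegral_indicator hSm,
      inter_comm]
    simp
  have hn' : (n : ℝ) ≠ 0 := by exact_mod_cast hn.ne'
  rw [e3, mul_div_cancel₀ _ hn']
  unfold coveredVol
  rw [← hLd, e1]; rfl

lemma lens_nonneg (d : ℕ) (ρ : ℝ) (w : EuclideanSpace ℝ (Fin d)) : 0 ≤ lens d ρ w :=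
  ENNReal.toReal_nonneg

lemma lens_le (d : ℕ) {ρ : ℝ} (hρ : 0 < ρ) (w : EuclideanSpace ℝ (Fin d)) : lens d ρ w ≤ phi d ρ := by
  rw [phi_eq d hρ]
  exact measureReal_mono inter_subset_left measure_closedBall_lt_top.ne

lemma lens_zero (d : ℕ) {ρ : ℝ} {w : EuclideanSpace ℝ (Fin d)} (hw : 2 * ρ < ‖w‖) :
    lens d ρ w = 0 := by
  have : closedBall (0 : EuclideanSpace ℝ (Fin d)) ρ ∩ closedBall w ρ = ∅ := by
    rw [← disjoint_iff_inter_eq_empty]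
    apply closedBall_disjoint_closedBall
    rw [dist_zero_left]; linarith
  simp [lens, this]

lemma lens_meas (d : ℕ) (ρ : ℝ) : Measurable (lens d ρ) := by
  have e : ∀ w, lens d ρ w = ∫ u, (closedBall (0 : EuclideanSpace ℝ (Fin d)) ρ).indicator
      (fun _ => (1 : ℝ)) u * (closedBall (0 : EuclideanSpace ℝ (Fin d)) ρ).indicator
      (fun _ => (1 : ℝ)) (u - w) := by
    intro w
    have : ∀ u, (closedBall (0 : EuclideanSpace ℝ (Fin d)) ρ).indicator
      (fun _ => (1 : ℝ)) u * (closedBall (0 : EuclideanSpace ℝ (Fin d)) ρ).indicator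
      (fun _ => (1 : ℝ)) (u - w) = (closedBall (0 : EuclideanSpace ℝ (Fin d)) ρ ∩
        closedBall w ρ).indicator (fun _ => (1 : ℝ)) u := by
      intro u
      simp only [indicator, mem_inter_iff, mem_closedBall_zero_iff, mem_closedBall, dist_eq_norm]
      by_cases h1 : ‖u‖ ≤ ρ <;> by_cases h2 : ‖u - w‖ ≤ ρ <;> simp [h1, h2]
    simp_rw [this]
    rw [integral_indicator (measurableSet_closedBall.inter measurableSet_closedBall)]
    simp [lens]
  have hm : Measurable ((closedBall (0 : EuclideanSpace ℝ (Fin d)) ρ).indicator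
      (fun _ => (1 : ℝ))) := measurable_const.indicator measurableSet_closedBall
  have : lens d ρ = fun w => ∫ u, (closedBall (0 : EuclideanSpace ℝ (Fin d)) ρ).indicator
      (fun _ => (1 : ℝ)) u * (closedBall (0 : EuclideanSpace ℝ (Fin d)) ρ).indicator
      (fun _ => (1 : ℝ)) (u - w) := funext e
  rw [this]
  refine (StronglyMeasurable.integral_prod_right (f := fun (w u : EuclideanSpace ℝ (Fin d)) =>
    (closedBall (0 : EuclideanSpace ℝ (Fin d)) ρ).indicator
      (fun _ => (1 : ℝ)) u * (closedBall (0 : EuclideanSpace ℝ (Fin d)) ρ).indicator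
      (fun _ => (1 : ℝ)) (u - w)) (Measurable.stronglyMeasurable ?_)).measurable
  exact (hm.comp measurable_snd).mul (hm.comp (measurable_snd.sub measurable_fst))

end

section

lemma cbox_fin {d : ℕ} {L : ℝ} (hL : 0 < L) : volume (cbox d L) ≠ ⊤ := by
  have h := (wv_mp (d := d) hL 0).map_eq
  have h2 : volume (cbox d L) = volume (box d L) := by
    have := congrArg (fun μ => μ univ) h
    simp only [Measure.map_apply (wv_mp (d := d) hL 0).measurable MeasurableSet.univ,
      preimage_univ, Measure.restrict_apply_univ] at this
    exact this.symm
  rw [h2]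
  unfold box
  rw [volume_pi, Measure.pi_pi]
  simp

lemma cbox_vol {d : ℕ} (hd : 1 ≤ d) {n : ℕ} (hn : 0 < n) :
    ∫ _ in cbox d (sideLen d n), (1 : ℝ) = n := by
  rw [← box_integral (sideLen_pos hn) 0 (F := fun _ => (1 : ℝ)) measurable_const]
  simp [Measure.real, box_vol hd hn]

lemma cbox_integral_of_lens {d : ℕ} {L ρ : ℝ} (hL : 4 * ρ < L)
    {F : EuclideanSpace ℝ (Fin d) → ℝ} (hF : ∀ w, 2 * ρ < ‖w‖ → F w = 0) :
    ∫ w in cbox d L, F w = ∫ w, F w := by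
  refine setIntegral_eq_integral_of_forall_compl_eq_zero fun w hw => hF w ?_
  by_contra h
  exact hw (ball_sub_cbox (ρ := 2 * ρ) (by linarith) (mem_closedBall_zero_iff.2 (not_lt.1 h)))

lemma exists_big {d : ℕ} (hd : 1 ≤ d) (c : ℝ) : ∀ᶠ n : ℕ in atTop, 0 < n ∧ c < sideLen d n :=
  (eventually_gt_atTop 0).and ((sideLen_tendsto hd).eventually_gt_atTop c)

lemma lens_int {d : ℕ} (hd : 1 ≤ d) {ρ : ℝ} (hρ : 0 < ρ) :
    ∫ w, lens d ρ w = phi d ρ ^ 2 := by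
  obtain ⟨n, hn, hL⟩ := (exists_big hd (4 * ρ)).exists
  have hP := uniformBox_prob hd hn
  have hn' : (n : ℝ) ≠ 0 := by exact_mod_cast hn.ne'
  have h := cc_int_l (kk_cov hd hn hρ (by linarith)) 0
  have e : ∀ a, cc (uniformBox d (sideLen d n)) (kk (sideLen d n) ρ) a 0 =
      lens d ρ (wv (sideLen d n) 0 a) / n := by
    intro a
    rw [← cc_eq hd hρ hL]
    unfold cc; simp_rw [mul_comm]
  simp_rw [e] at h
  rw [uniformBox_integral hd, integral_div, box_integral (sideLen_pos hn) 0 (lens_meas d ρ),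
    cbox_integral_of_lens hL (fun w hw => lens_zero d hw)] at h
  field_simp at h
  exact h

/-- the main part of the rescaled variance -/
def mainInt (d n : ℕ) (ρ : ℝ) : ℝ :=
  ∫ w, ((1 - 2 * (phi d ρ / n) + lens d ρ w / n) ^ n - (1 - 2 * (phi d ρ / n)) ^ n)

lemma var_formula {d : ℕ} (hd : 1 ≤ d) {n : ℕ} (hn : 0 < n) {ρ : ℝ} (hρ : 0 < ρ)
    (hL : 4 * ρ < sideLen d n) :
    n * ∫ ω, (vv (uniformBox d (sideLen d n)) (kk (sideLen d n) ρ) ω -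
        (1 - (1 - phi d ρ / n) ^ n)) ^ 2 ∂(Measure.pi fun _ : Fin n => uniformBox d (sideLen d n)) =
      mainInt d n ρ + n * ((1 - 2 * (phi d ρ / n)) ^ n - (1 - phi d ρ / n) ^ (2 * n)) := by
  have hP := uniformBox_prob hd hn
  have hn' : (n : ℝ) ≠ 0 := by exact_mod_cast hn.ne'
  have hL0 := sideLen_pos (d := d) hn
  rw [vv_var (kk_cov hd hn hρ (by linarith)) (kk_comm ρ)]
  set b := (1 - 2 * (phi d ρ / n)) with hb
  have hm : Measurable fun w => (b + lens d ρ w / n) ^ n :=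
    ((lens_meas d ρ).div_const _ |>.const_add _).pow_const n
  have e : ∀ y, ∫ z, (b + cc (uniformBox d (sideLen d n)) (kk (sideLen d n) ρ) y z) ^ n
      ∂(uniformBox d (sideLen d n)) = (mainInt d n ρ + n * b ^ n) / n := by
    intro y
    simp_rw [cc_eq hd hρ hL]
    rw [uniformBox_integral hd, box_integral hL0 y (F := fun w => (b + lens d ρ w / n) ^ n) hm]
    congr 1
    have e2 : ∀ w, (b + lens d ρ w / n) ^ n = ((b + lens d ρ w / n) ^ n - b ^ n) + b ^ n * 1 :=
      fun w => by ring
    have hfin : IsFiniteMeasure (volume.restrict (cbox d (sideLen d n))) :=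
      ⟨by rw [Measure.restrict_apply_univ]; exact (cbox_fin hL0).lt_top⟩
    have i1 : Integrable (fun w => (b + lens d ρ w / n) ^ n - b ^ n)
        (volume.restrict (cbox d (sideLen d n))) := by
      refine bdd_int (K := (|b| + phi d ρ) ^ n + |b| ^ n) (hm.sub_const _) fun w => ?_
      refine (abs_sub _ _).trans ?_
      rw [abs_pow, abs_pow]
      refine add_le_add (pow_le_pow_left₀ (abs_nonneg _) ((abs_add_le _ _).trans ?_) n) le_rfl
      refine add_le_add le_rfl ?_
      rw [abs_of_nonneg (div_nonneg (lens_nonneg _ _ _) (Nat.cast_nonneg n))]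
      exact (div_le_self (lens_nonneg _ _ _) (by exact_mod_cast hn)).trans (lens_le d hρ w)
    rw [integral_congr_ae (ae_of_all _ e2), integral_add i1 (integrable_const _), integral_const_mul,
      cbox_vol hd hn, cbox_integral_of_lens hL]
    · unfold mainInt; ring
    · intro w hw; rw [lens_zero d hw]; simp
  simp_rw [e]
  simp only [integral_const, probReal_univ, one_smul]
  field_simp
  ring

lemma one_sub_pow_tendsto (a : ℝ) : Tendsto (fun n : ℕ => (1 - a / n) ^ n) atTop (𝓝 (Real.exp (-a))) := by
  have := Real.tendsto_one_add_div_pow_exp (-a)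
  refine this.congr fun n => ?_
  congr 1; ring

lemma mainInt_tendsto {d : ℕ} (hd : 1 ≤ d) {ρ : ℝ} (hρ : 0 < ρ) :
    Tendsto (fun n => mainInt d n ρ) atTop
      (𝓝 (∫ w, (Real.exp (-(2 * phi d ρ - lens d ρ w)) - Real.exp (-(2 * phi d ρ))))) := by
  have hφ := phi_pos d hρ
  unfold mainInt
  refine tendsto_integral_filter_of_dominated_convergence
    ((closedBall (0 : EuclideanSpace ℝ (Fin d)) (2 * ρ)).indicator fun _ => (1 : ℝ)) ?_ ?_ ?_ ?_
  · refine Eventually.of_forall fun n => Measurable.aestronglyMeasurable ?_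
    exact (((lens_meas d ρ).div_const _ |>.const_add _).pow_const n).sub_const _
  · filter_upwards [eventually_gt_atTop 0, eventually_ge_atTop (Nat.ceil (2 * phi d ρ))] with n hn hn2
    refine ae_of_all _ fun w => ?_
    have hn' : (0 : ℝ) < n := by exact_mod_cast hn
    by_cases hw : w ∈ closedBall (0 : EuclideanSpace ℝ (Fin d)) (2 * ρ)
    · rw [indicator_of_mem hw, Real.norm_eq_abs]
      have h2 : 2 * phi d ρ ≤ n := (Nat.le_ceil _).trans (by exact_mod_cast hn2)
      have h3 : 2 * (phi d ρ / n) ≤ 1 := by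
        rw [← mul_div_assoc, div_le_one hn']; exact h2
      have h4 : 0 ≤ lens d ρ w / n := div_nonneg (lens_nonneg _ _ _) hn'.le
      have h5 : lens d ρ w / n ≤ phi d ρ / n := div_le_div_of_nonneg_right (lens_le d hρ w) hn'.le
      have h6 : 0 < phi d ρ / n := div_pos hφ hn'
      have a1 : 0 ≤ (1 - 2 * (phi d ρ / n)) ^ n := pow_nonneg (by linarith) n
      have a2 : (1 - 2 * (phi d ρ / n)) ^ n ≤ 1 := pow_le_one₀ (by linarith) (by linarith)
      have a3 : 0 ≤ (1 - 2 * (phi d ρ / n) + lens d ρ w / n) ^ n := pow_nonneg (by linarith) n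
      have a4 : (1 - 2 * (phi d ρ / n) + lens d ρ w / n) ^ n ≤ 1 :=
        pow_le_one₀ (by linarith) (by linarith)
      rw [abs_le]; constructor <;> linarith
    · rw [indicator_of_notMem hw, lens_zero d (by
        rw [mem_closedBall_zero_iff] at hw; exact not_le.1 hw)]
      simp
  · rw [integrable_indicator_iff measurableSet_closedBall]
    exact integrableOn_const measure_closedBall_lt_top.ne
  · refine ae_of_all _ fun w => ?_
    refine Tendsto.sub ?_ ?_
    · refine (one_sub_pow_tendsto (2 * phi d ρ - lens d ρ w)).congr fun n => ?_
      congr 1; ring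
    · refine (one_sub_pow_tendsto (2 * phi d ρ)).congr fun n => ?_
      congr 1; ring

lemma pow_sub_bounds {a b : ℝ} (hb : 0 ≤ b) (hab : b ≤ a) (n : ℕ) :
    (n : ℝ) * (a - b) * b ^ (n - 1) ≤ a ^ n - b ^ n ∧ a ^ n - b ^ n ≤ n * (a - b) * a ^ (n - 1) := by
  have h := (Commute.all a b).geom_sum₂_mul n
  have ha := hb.trans hab
  rw [← h]
  have h1 : (n : ℝ) * b ^ (n - 1) ≤ ∑ i ∈ Finset.range n, a ^ i * b ^ (n - 1 - i) := by
    have : (n : ℝ) * b ^ (n - 1) = ∑ i ∈ Finset.range n, b ^ (n - 1) := by simp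
    rw [this]
    refine Finset.sum_le_sum fun i hi => ?_
    have e : b ^ (n - 1) = b ^ i * b ^ (n - 1 - i) := by
      rw [← pow_add]; congr 1; have := Finset.mem_range.1 hi; omega
    rw [e]
    exact mul_le_mul_of_nonneg_right (pow_le_pow_left₀ hb hab i) (pow_nonneg hb _)
  have h2 : ∑ i ∈ Finset.range n, a ^ i * b ^ (n - 1 - i) ≤ (n : ℝ) * a ^ (n - 1) := by
    have : (n : ℝ) * a ^ (n - 1) = ∑ i ∈ Finset.range n, a ^ (n - 1) := by simp
    rw [this]
    refine Finset.sum_le_sum fun i hi => ?_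
    have e : a ^ (n - 1) = a ^ i * a ^ (n - 1 - i) := by
      rw [← pow_add]; congr 1; have := Finset.mem_range.1 hi; omega
    rw [e]
    exact mul_le_mul_of_nonneg_left (pow_le_pow_left₀ hb hab _) (pow_nonneg ha _)
  have h3 : 0 ≤ a - b := by linarith
  constructor <;> nlinarith

lemma one_sub_pow_pred_tendsto (a : ℝ) :
    Tendsto (fun n : ℕ => (1 - a / n) ^ (n - 1)) atTop (𝓝 (Real.exp (-a))) := by
  have h0 : Tendsto (fun n : ℕ => 1 - a / (n : ℝ)) atTop (𝓝 1) := by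
    simpa using (tendsto_const_nhds (x := (1 : ℝ))).sub (tendsto_const_div_atTop_nhds_zero_nat a)
  have h := (one_sub_pow_tendsto a).div h0 one_ne_zero
  rw [div_one] at h
  refine h.congr' ?_
  filter_upwards [eventually_gt_atTop 0, h0.eventually_ne one_ne_zero] with n hn hne
  simp only [Pi.div_apply]
  obtain ⟨m, rfl⟩ : ∃ m, n = m + 1 := ⟨n - 1, by omega⟩
  rw [pow_succ, mul_div_cancel_right₀ _ hne]; simp

lemma second_tendsto (φ : ℝ) (hφ : 0 < φ) :
    Tendsto (fun n : ℕ => (n : ℝ) * ((1 - 2 * (φ / n)) ^ n - (1 - φ / n) ^ (2 * n))) atTop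
      (𝓝 (-(φ ^ 2 * Real.exp (-(2 * φ))))) := by
  have h1 : Tendsto (fun n : ℕ => -(φ ^ 2 * (1 - (2 * φ) / n) ^ (n - 1))) atTop
      (𝓝 (-(φ ^ 2 * Real.exp (-(2 * φ))))) :=
    ((one_sub_pow_pred_tendsto (2 * φ)).const_mul _).neg
  have h2 : Tendsto (fun n : ℕ => -(φ ^ 2 * ((1 - φ / n) ^ (n - 1)) ^ 2)) atTop
      (𝓝 (-(φ ^ 2 * Real.exp (-(2 * φ))))) := by
    have e : Real.exp (-(2 * φ)) = Real.exp (-φ) ^ 2 := by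
      rw [← Real.exp_nat_mul]; congr 1; push_cast; ring
    rw [e]
    exact (((one_sub_pow_pred_tendsto φ).pow 2).const_mul _).neg
  refine tendsto_of_tendsto_of_tendsto_of_le_of_le' h2 h1 ?_ ?_
  all_goals
    filter_upwards [eventually_gt_atTop 0, eventually_ge_atTop (Nat.ceil (2 * φ))] with n hn hn2
    have hn' : (0 : ℝ) < n := by exact_mod_cast hn
    have hc : 2 * φ ≤ n := (Nat.le_ceil _).trans (by exact_mod_cast hn2)
    have h3 : 2 * (φ / n) ≤ 1 := by
      rw [← mul_div_assoc, div_le_one hn']; exact hc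
    obtain ⟨b1, b2⟩ := pow_sub_bounds (a := (1 - φ / n) ^ 2) (b := 1 - 2 * (φ / n)) (by linarith)
      (by nlinarith [sq_nonneg (φ / n)]) n
    have e1 : (1 - φ / n) ^ 2 - (1 - 2 * (φ / n)) = φ ^ 2 / n ^ 2 := by ring
    rw [e1, ← pow_mul] at b1 b2
    have e2 : (n : ℝ) * (n * (φ ^ 2 / n ^ 2)) = φ ^ 2 := by field_simp
  · have := mul_le_mul_of_nonneg_left b2 hn'.le
    have e3 : ((1 - φ / (n : ℝ)) ^ 2) ^ (n - 1) = ((1 - φ / (n : ℝ)) ^ (n - 1)) ^ 2 := by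
      rw [← pow_mul, ← pow_mul, mul_comm]
    rw [← mul_assoc, e2, e3] at this
    linarith
  · have := mul_le_mul_of_nonneg_left b1 hn'.le
    rw [← mul_assoc, e2] at this
    rw [mul_div_assoc]
    linarith

end

section

open scoped Pointwise in
lemma lens_omega {d : ℕ} (hd : 1 ≤ d) {ρ : ℝ} (hρ : 0 < ρ) (w : EuclideanSpace ℝ (Fin d)) :
    2 * phi d ρ - lens d ρ w = ρ ^ d * omegaVol d (‖w‖ / ρ) := by
  have h1 : volume.real (closedBall (0 : EuclideanSpace ℝ (Fin d)) ρ ∪ closedBall w ρ) +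
      lens d ρ w = phi d ρ + phi d ρ := by
    unfold lens
    rw [measureReal_union_add_inter measurableSet_closedBall measure_closedBall_lt_top.ne
      measure_closedBall_lt_top.ne, Measure.addHaar_real_closedBall_center volume w,
      phi_eq d hρ]
  have hu : ‖unitVec d‖ = 1 := by
    unfold unitVec
    rw [dif_pos (by omega)]
    simp
  have hn : ‖ρ⁻¹ • w‖ = ‖(‖w‖ / ρ) • unitVec d‖ := by
    rw [norm_smul, norm_smul, hu, Real.norm_of_nonneg (by positivity), Real.norm_of_nonneg (by positivity)]
    ring
  have h2 : closedBall (0 : EuclideanSpace ℝ (Fin d)) ρ ∪ closedBall w ρ =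
      ρ • (closedBall (0 : EuclideanSpace ℝ (Fin d)) 1 ∪ closedBall (ρ⁻¹ • w) 1) := by
    rw [Set.smul_set_union, _root_.smul_closedBall _ _ zero_le_one, _root_.smul_closedBall _ _ zero_le_one,
      smul_zero, smul_inv_smul₀ hρ.ne', Real.norm_of_nonneg hρ.le, mul_one]
  set R := Submodule.reflection (ℝ ∙ (ρ⁻¹ • w - (‖w‖ / ρ) • unitVec d))ᗮ with hR
  have hRw : R (ρ⁻¹ • w) = (‖w‖ / ρ) • unitVec d := Submodule.reflection_sub hn
  have h3 : R ⁻¹' (closedBall (0 : EuclideanSpace ℝ (Fin d)) 1 ∪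
      closedBall ((‖w‖ / ρ) • unitVec d) 1) =
      closedBall (0 : EuclideanSpace ℝ (Fin d)) 1 ∪ closedBall (ρ⁻¹ • w) 1 := by
    rw [← hRw, preimage_union, LinearIsometryEquiv.preimage_closedBall,
      LinearIsometryEquiv.preimage_closedBall, LinearIsometryEquiv.symm_apply_apply, map_zero]
  have h4 : volume.real (closedBall (0 : EuclideanSpace ℝ (Fin d)) ρ ∪ closedBall w ρ) =
      ρ ^ d * omegaVol d (‖w‖ / ρ) := by
    unfold omegaVol Measure.real
    rw [h2, Measure.addHaar_smul_of_nonneg _ hρ.le, ← h3,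
      R.measurePreserving.measure_preimage
        (measurableSet_closedBall.union measurableSet_closedBall).nullMeasurableSet,
      ENNReal.toReal_mul, ENNReal.toReal_ofReal (by positivity)]
    simp
  linarith

lemma lens_bdint {d : ℕ} {ρ : ℝ} {F : EuclideanSpace ℝ (Fin d) → ℝ}
    (hF : Measurable F) {C : ℝ} (hb : ∀ w, |F w| ≤ C) (hz : ∀ w, 2 * ρ < ‖w‖ → F w = 0) :
    Integrable F := by
  have : F = (closedBall (0 : EuclideanSpace ℝ (Fin d)) (2 * ρ)).indicator F := by
    ext w
    by_cases h : w ∈ closedBall (0 : EuclideanSpace ℝ (Fin d)) (2 * ρ)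
    · rw [indicator_of_mem h]
    · rw [indicator_of_notMem h]; apply hz
      rw [mem_closedBall_zero_iff] at h; linarith
  rw [this, integrable_indicator_iff measurableSet_closedBall]
  refine Measure.integrableOn_of_bounded (M := C) measure_closedBall_lt_top.ne
    hF.aestronglyMeasurable (Eventually.of_forall fun w => ?_)
  rw [Real.norm_eq_abs]; exact hb w

lemma polar_eq {d : ℕ} (hd : 1 ≤ d) {ρ : ℝ} (hρ : 0 < ρ) :
    ∫ w in closedBall (0 : EuclideanSpace ℝ (Fin d)) (2 * ρ),
      Real.exp (-(2 * phi d ρ - lens d ρ w)) = ρ ^ d * Jint 2 d ρ := by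
  set f : ℝ → ℝ := (Iic (2 * ρ)).indicator fun r => Real.exp (-(ρ ^ d * omegaVol d (r / ρ))) with hf
  have e1 : ∫ w in closedBall (0 : EuclideanSpace ℝ (Fin d)) (2 * ρ),
      Real.exp (-(2 * phi d ρ - lens d ρ w)) = ∫ w : EuclideanSpace ℝ (Fin d), f ‖w‖ := by
    rw [← integral_indicator measurableSet_closedBall]
    congr 1
    ext w
    rw [hf]
    simp only [indicator, mem_closedBall_zero_iff, mem_Iic, lens_omega hd hρ]
  have : Nontrivial (EuclideanSpace ℝ (Fin d)) := by
    have : Nonempty (Fin d) := ⟨⟨0, by omega⟩⟩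
    infer_instance
  rw [e1, integral_fun_norm_addHaar volume f]
  have e2 : ∫ y in Ioi (0 : ℝ), y ^ (Module.finrank ℝ (EuclideanSpace ℝ (Fin d)) - 1) • f y =
      ρ ^ d * ∫ t in (0:ℝ)..2, Real.exp (-(ρ ^ d * omegaVol d t)) * t ^ (d - 1) := by
    have e3 : ∀ y, y ^ (Module.finrank ℝ (EuclideanSpace ℝ (Fin d)) - 1) • f y =
        (Iic (2 * ρ)).indicator
          (fun y => y ^ (d - 1) * Real.exp (-(ρ ^ d * omegaVol d (y / ρ)))) y := by
      intro y
      rw [hf]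
      simp [indicator]
    simp_rw [e3]
    rw [setIntegral_indicator measurableSet_Iic, Ioi_inter_Iic,
      ← intervalIntegral.integral_of_le (by positivity)]
    have e4 : ∀ y : ℝ, y ^ (d - 1) * Real.exp (-(ρ ^ d * omegaVol d (y / ρ))) =
        (fun t : ℝ => ρ ^ (d - 1) * (Real.exp (-(ρ ^ d * omegaVol d t)) * t ^ (d - 1))) (y / ρ) := by
      intro y
      simp only [div_pow]
      field_simp
    simp_rw [e4]
    rw [intervalIntegral.integral_comp_div (fun t : ℝ => ρ ^ (d - 1) * (Real.exp (-(ρ ^ d * omegaVol d t)) * t ^ (d - 1))) hρ.ne', zero_div, mul_div_cancel_right₀ _ hρ.ne',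
      intervalIntegral.integral_const_mul, smul_eq_mul, ← mul_assoc, mul_comm ρ,
      ← pow_succ, Nat.sub_add_cancel hd]
  rw [e2]
  unfold Jint unitBallVol
  have e5 : volume.real (ball (0 : EuclideanSpace ℝ (Fin d)) 1) =
      (volume (closedBall (0 : EuclideanSpace ℝ (Fin d)) 1)).toReal := by
    rw [← Measure.addHaar_real_closedBall_eq_addHaar_real_ball]; rfl
  rw [e5]
  simp only [finrank_euclideanSpace, Fintype.card_fin, smul_eq_mul, nsmul_eq_mul]
  ring

lemma limInt_gV {d : ℕ} (hd : 1 ≤ d) {ρ : ℝ} (hρ : 0 < ρ) :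
    (∫ w, (Real.exp (-(2 * phi d ρ - lens d ρ w)) - Real.exp (-(2 * phi d ρ)))) -
      phi d ρ ^ 2 * Real.exp (-(2 * phi d ρ)) = gV d ρ := by
  have hφ := phi_pos d hρ
  have hfin : volume (closedBall (0 : EuclideanSpace ℝ (Fin d)) (2 * ρ)) ≠ ∞ :=
    measure_closedBall_lt_top.ne
  have e1 : (∫ w, (Real.exp (-(2 * phi d ρ - lens d ρ w)) - Real.exp (-(2 * phi d ρ)))) =
      ∫ w in closedBall (0 : EuclideanSpace ℝ (Fin d)) (2 * ρ),
        (Real.exp (-(2 * phi d ρ - lens d ρ w)) - Real.exp (-(2 * phi d ρ))) := by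
    symm
    apply setIntegral_eq_integral_of_forall_compl_eq_zero
    intro w hw
    rw [mem_closedBall_zero_iff, not_le] at hw
    simp [lens_zero d hw]
  have hv : volume.real (closedBall (0 : EuclideanSpace ℝ (Fin d)) (2 * ρ)) = 2 ^ d * phi d ρ := by
    rw [← phi_eq d (by positivity)]; unfold phi; ring
  rw [e1, integral_sub, polar_eq hd hρ, setIntegral_const, hv]
  · unfold gV; rw [smul_eq_mul]; ring
  · refine Measure.integrableOn_of_bounded (M := 1) hfin ?_ (Eventually.of_forall fun w => ?_)
    · exact (Real.measurable_exp.comp (((lens_meas d ρ).const_sub _).neg)).aestronglyMeasurable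
    · rw [Real.norm_of_nonneg (Real.exp_pos _).le]
      apply Real.exp_le_one_iff.2
      have := lens_le d hρ w
      linarith
  · exact integrableOn_const hfin

lemma gV_pos {d : ℕ} (hd : 1 ≤ d) {ρ : ℝ} (hρ : 0 < ρ) : 0 < gV d ρ := by
  have hφ := phi_pos d hρ
  have hz := fun w : EuclideanSpace ℝ (Fin d) => lens_zero d (ρ := ρ) (w := w)
  have il : Integrable (lens d ρ) := lens_bdint (ρ := ρ) (lens_meas d ρ) (C := phi d ρ)
    (fun w => by rw [abs_of_nonneg (lens_nonneg d ρ w)]; exact lens_le d hρ w) hz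
  have ie : Integrable (fun w => Real.exp (lens d ρ w) - 1) :=
    lens_bdint (ρ := ρ) ((Real.measurable_exp.comp (lens_meas d ρ)).sub_const 1)
    (C := Real.exp (phi d ρ))
    (fun w => by
      have h1 := Real.one_le_exp (lens_nonneg d ρ w)
      have h2 := Real.exp_le_exp.2 (lens_le d hρ w)
      rw [abs_of_nonneg (by linarith)]; linarith) (fun w h => by simp [hz w h])
  have e : gV d ρ = Real.exp (-(2 * phi d ρ)) * ∫ w, (Real.exp (lens d ρ w) - 1 - lens d ρ w) := by
    rw [integral_sub ie il, mul_sub, lens_int hd hρ, ← limInt_gV hd hρ, ← integral_const_mul]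
    congr 1
    · congr 1
      ext w
      rw [mul_sub, ← Real.exp_add]
      congr 2
      · ring
      · ring
    · ring
  have hnn : ∀ w, 0 ≤ Real.exp (lens d ρ w) - 1 - lens d ρ w := fun w => by
    linarith [Real.add_one_le_exp (lens d ρ w)]
  rw [e]
  refine mul_pos (Real.exp_pos _) (lt_of_le_of_ne (integral_nonneg hnn) fun h => ?_)
  have h0 := (integral_eq_zero_iff_of_nonneg hnn (ie.sub il)).1 h.symm
  have h1 : lens d ρ =ᵐ[volume] 0 := by
    filter_upwards [h0] with w hw
    by_contra hne
    have := Real.add_one_lt_exp hne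
    simp only [Pi.zero_apply] at hw
    linarith
  have h2 := lens_int hd hρ
  rw [integral_congr_ae h1] at h2
  simp only [Pi.zero_apply, integral_zero] at h2
  have := pow_pos hφ 2
  linarith

lemma var_tendsto {d : ℕ} (hd : 1 ≤ d) {ρ : ℝ} (hρ : 0 < ρ) :
    Tendsto (fun n : ℕ => (n : ℝ) * ∫ ω, (vv (uniformBox d (sideLen d n)) (kk (sideLen d n) ρ) ω -
      (1 - (1 - phi d ρ / n) ^ n)) ^ 2
        ∂(Measure.pi fun _ : Fin n => uniformBox d (sideLen d n))) atTop (𝓝 (gV d ρ)) := by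
  have h := (mainInt_tendsto hd hρ).add (second_tendsto (phi d ρ) (phi_pos d hρ))
  rw [← sub_eq_add_neg, limInt_gV hd hρ] at h
  refine h.congr' ?_
  filter_upwards [exists_big hd (4 * ρ)] with n hn
  exact (var_formula hd hn.1 hρ hn.2).symm

end

section

lemma rescale {n s2 φ s : ℝ} (hn : 0 < n) (hs : 0 < s2) (hφ : 0 < φ) :
    √n * (√(0.4 * (s / √s2 * (φ / n / √s2) ^ 2)) + √(2 * (s / √s2 * (φ / n / √s2) ^ 2) +
      √(n * (2 * ((φ / n) ^ 2 + n * (φ / n) ^ 3) ^ 2 +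
        8 * (φ / n) ^ 2 * (n ^ 2 * (φ / n) ^ 4 + n * (φ / n) ^ 3))) / s2)) ^ 2 =
    (√(0.4 * (s * φ ^ 2 / √(n * s2) ^ 3)) + √(2 * (s * φ ^ 2 / √(n * s2) ^ 3) +
      √(2 * φ ^ 4 * (1 + 6 * φ + 5 * φ ^ 2)) / (n * s2))) ^ 2 := by
  obtain ⟨a, ha, rfl⟩ : ∃ a, 0 < a ∧ n = a ^ 2 := ⟨√n, Real.sqrt_pos.2 hn, (Real.sq_sqrt hn.le).symm⟩
  obtain ⟨b, hb, rfl⟩ : ∃ b, 0 < b ∧ s2 = b ^ 2 := ⟨√s2, Real.sqrt_pos.2 hs, (Real.sq_sqrt hs.le).symm⟩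
  have e0 : √(a ^ 2 * b ^ 2) = a * b := by
    rw [← mul_pow, Real.sqrt_sq (by positivity)]
  have e1 : √(a ^ 2 * (2 * ((φ / a ^ 2) ^ 2 + a ^ 2 * (φ / a ^ 2) ^ 3) ^ 2 +
        8 * (φ / a ^ 2) ^ 2 * ((a ^ 2) ^ 2 * (φ / a ^ 2) ^ 4 + a ^ 2 * (φ / a ^ 2) ^ 3))) =
      √(2 * φ ^ 4 * (1 + 6 * φ + 5 * φ ^ 2)) / a ^ 3 := by
    have : a ^ 2 * (2 * ((φ / a ^ 2) ^ 2 + a ^ 2 * (φ / a ^ 2) ^ 3) ^ 2 +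
        8 * (φ / a ^ 2) ^ 2 * ((a ^ 2) ^ 2 * (φ / a ^ 2) ^ 4 + a ^ 2 * (φ / a ^ 2) ^ 3)) =
        2 * φ ^ 4 * (1 + 6 * φ + 5 * φ ^ 2) / (a ^ 3) ^ 2 := by
      field_simp; ring
    rw [this, Real.sqrt_div (by positivity), Real.sqrt_sq (by positivity)]
  rw [e0, e1, Real.sqrt_sq ha.le, Real.sqrt_sq hb.le]
  set c := √(2 * φ ^ 4 * (1 + 6 * φ + 5 * φ ^ 2))
  have e2 : √a ^ 2 = a := Real.sq_sqrt ha.le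
  have e3 : √(0.4 * (s * φ ^ 2 / (a * b) ^ 3)) =
      √a * √(0.4 * (s / b * (φ / a ^ 2 / b) ^ 2)) := by
    rw [← Real.sqrt_mul ha.le]; congr 1; field_simp
  have e4 : √(2 * (s * φ ^ 2 / (a * b) ^ 3) + c / (a ^ 2 * b ^ 2)) =
      √a * √(2 * (s / b * (φ / a ^ 2 / b) ^ 2) + c / a ^ 3 / b ^ 2) := by
    rw [← Real.sqrt_mul ha.le]; congr 1; field_simp
  rw [e3, e4, ← mul_add, mul_pow, e2]

lemma kol_bound {d : ℕ} (hd : 1 ≤ d) {n : ℕ} (hn : 0 < n) {ρ : ℝ} (hρ : 0 < ρ)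
    (hL : 4 * ρ < sideLen d n) {v : ℝ}
    (hv : v = (n : ℝ) * ∫ ω, (vv (uniformBox d (sideLen d n)) (kk (sideLen d n) ρ) ω -
      (1 - (1 - phi d ρ / n) ^ n)) ^ 2
        ∂(Measure.pi fun _ : Fin n => uniformBox d (sideLen d n))) (hv0 : 0 < v) :
    √n * kolDist (binppLaw d n) (coveredVol d n ρ) ≤
      (√(0.4 * ((1 - (1 - phi d ρ / n) ^ n) * phi d ρ ^ 2 / √v ^ 3)) +
        √(2 * ((1 - (1 - phi d ρ / n) ^ n) * phi d ρ ^ 2 / √v ^ 3) +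
      √(2 * phi d ρ ^ 4 * (1 + 6 * phi d ρ + 5 * phi d ρ ^ 2)) / v)) ^ 2 := by
  have hP := uniformBox_prob hd hn
  have hφ := phi_pos d hρ
  have hn' : (0 : ℝ) < n := by exact_mod_cast hn
  have hc := kk_cov hd hn hρ (by linarith : 2 * ρ < sideLen d n)
  set s2 := ∫ ω, (vv (uniformBox d (sideLen d n)) (kk (sideLen d n) ρ) ω -
      (1 - (1 - phi d ρ / n) ^ n)) ^ 2
        ∂(Measure.pi fun _ : Fin n => uniformBox d (sideLen d n)) with hs2
  have hs0 : 0 < s2 := by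
    rw [hv] at hv0; exact (mul_pos_iff_of_pos_left hn').1 hv0
  have key := abstract_kol hc (by positivity) hn hs2 hs0
  have hm := vv_mean (n := n) hc
  have e1 : ∫ ω, coveredVol d n ρ ω ∂(binppLaw d n) = n * (1 - (1 - phi d ρ / n) ^ n) := by
    simp_rw [coveredVol_eq hd hn]
    rw [integral_const_mul, ← hm]; rfl
  have e2 : variance (coveredVol d n ρ) (binppLaw d n) = (n : ℝ) ^ 2 * s2 := by
    have : coveredVol d n ρ = fun ω => n * vv (uniformBox d (sideLen d n)) (kk (sideLen d n) ρ) ω :=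
      funext fun ω => coveredVol_eq hd hn ω
    rw [this, variance_const_mul, variance_eq_integral]
    · congr 1
      rw [hs2]
      unfold binppLaw
      rw [hm]
    · exact (vv_meas hc).aemeasurable
  have e3 : kolDist (binppLaw d n) (coveredVol d n ρ) =
      ⨆ t : ℝ, |(Measure.pi fun _ : Fin n => uniformBox d (sideLen d n)).real
        {ω | (vv (uniformBox d (sideLen d n)) (kk (sideLen d n) ρ) ω -
          (1 - (1 - phi d ρ / n) ^ n)) / √s2 ≤ t} - stdGaussCDF t| := by
    unfold kolDist
    rw [e1, e2]
    have e4 : ∀ ω, (coveredVol d n ρ ω - n * (1 - (1 - phi d ρ / n) ^ n)) / √((n : ℝ) ^ 2 * s2) =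
        (vv (uniformBox d (sideLen d n)) (kk (sideLen d n) ρ) ω -
          (1 - (1 - phi d ρ / n) ^ n)) / √s2 := by
      intro ω
      rw [coveredVol_eq hd hn, Real.sqrt_mul (by positivity), Real.sqrt_sq hn'.le, ← mul_sub,
        mul_div_mul_left _ _ hn'.ne']
    simp_rw [e4]
    rfl
  rw [e3, hv, ← rescale hn' hs0 hφ]
  exact mul_le_mul_of_nonneg_left key (Real.sqrt_nonneg _)

lemma frac_ge {c : ℝ} (hc : 0 ≤ c) : ∀ᶠ n : ℕ in atTop, 2 ≤ (2 * (n : ℝ) - c) / (n - c) := by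
  filter_upwards [eventually_gt_atTop (Nat.ceil c)] with n hn
  have : c < n := Nat.lt_of_ceil_lt hn
  rw [le_div_iff₀ (by linarith)]; linarith

lemma eta_ge {d : ℕ} (hd : 1 ≤ d) {ρ : ℝ} (hρ : 0 < ρ) {η : ℝ}
    (hη : Tendsto (fun n : ℕ => etaV d n ρ) atTop (𝓝 η)) :
    2 * phi d ρ ^ 2 * (4 * phi d ρ + 1) ^ 2 * (1 + 18 * phi d ρ + 72 * phi d ρ ^ 2) ≤ η := by
  have hφ := phi_pos d hρ
  refine ge_of_tendsto hη ?_
  filter_upwards [frac_ge (c := 6 ^ d * phi d ρ) (by positivity),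
    frac_ge (c := 3 * 2 ^ d * phi d ρ) (by positivity)] with n h1 h2
  unfold etaV
  have p3 : (3 : ℝ) ≤ 3 ^ d := le_self_pow₀ (by norm_num) (by omega)
  have p2 : (2 : ℝ) ≤ 2 ^ d := le_self_pow₀ (by norm_num) (by omega)
  have p6 : (6 : ℝ) ≤ 6 ^ d := le_self_pow₀ (by norm_num) (by omega)
  have p66 : (36 : ℝ) ≤ 6 ^ (2 * d) := by rw [pow_mul]; norm_num; exact le_self_pow₀ (by norm_num) (by omega)
  set x := phi d ρ
  have t2 : 0 ≤ 2 * x ^ 4 *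
      (3 * (4 ^ d + 2 ^ d) * x +
        3 * 4 ^ d * x ^ 2 * ((2 * n - 3 * 2 ^ d * x) / (n - 3 * 2 ^ d * x)) +
        4 + 2 / n) := by
    have : 0 ≤ ((2 * n - 3 * 2 ^ d * x) / (n - 3 * 2 ^ d * x)) := by linarith
    positivity
  have t1 : 2 * x ^ 2 * (4 * x + 1) ^ 2 * (1 + 18 * x + 72 * x ^ 2) ≤
      2 * x ^ 2 * ((3 ^ d + 1) * x + 1) ^ 2 *
      (1 + (2 ^ d + 1) * 6 ^ d * x +
        ((2 * n - 6 ^ d * x) / (n - 6 ^ d * x)) * 6 ^ (2 * d) * x ^ 2) := by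
    have q1 : (18 : ℝ) ≤ (2 ^ d + 1) * 6 ^ d := by nlinarith
    have q2 : (72 : ℝ) ≤ ((2 * n - 6 ^ d * x) / (n - 6 ^ d * x)) * 6 ^ (2 * d) := by nlinarith
    have q3 : (4 : ℝ) ≤ 3 ^ d + 1 := by linarith
    gcongr
  linarith

lemma final_ineq {φ s g η : ℝ} (hφ : 0 < φ) (hg : 0 < g) (hs : s = 1 - Real.exp (-φ))
    (hη : 2 * φ ^ 2 * (4 * φ + 1) ^ 2 * (1 + 18 * φ + 72 * φ ^ 2) ≤ η) :
    (√(0.4 * (s * φ ^ 2 / √g ^ 3)) + √(2 * (s * φ ^ 2 / √g ^ 3) +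
      √(2 * φ ^ 4 * (1 + 6 * φ + 5 * φ ^ 2)) / g)) ^ 2 ≤
    s / (5 * g) * (√(11 * φ ^ 2 / √g + 5 * √η) + 2 * φ / g ^ ((1 : ℝ) / 4)) ^ 2 := by
  have hs1 : φ ≤ s * (1 + φ) := by
    have h1 := Real.add_one_le_exp φ
    have h2 : Real.exp (-φ) * Real.exp φ = 1 := by rw [← Real.exp_add]; simp
    have h3 := mul_le_mul_of_nonneg_left h1 (Real.exp_pos (-φ)).le
    rw [hs]; nlinarith
  have hs0 : 0 < s := by
    by_contra h; push Not at h; nlinarith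
  have hη0 : 0 ≤ η := le_trans (by positivity) hη
  have hc : √(2 * φ ^ 4 * (1 + 6 * φ + 5 * φ ^ 2)) ≤ s * √η := by
    have : s * √η = √(s ^ 2 * η) := by rw [Real.sqrt_mul (by positivity), Real.sqrt_sq hs0.le]
    rw [this]
    apply Real.sqrt_le_sqrt
    calc 2 * φ ^ 4 * (1 + 6 * φ + 5 * φ ^ 2)
        ≤ 2 * φ ^ 2 * (s * (1 + φ)) ^ 2 * (1 + 18 * φ + 72 * φ ^ 2) := by
          have : φ ^ 2 ≤ (s * (1 + φ)) ^ 2 := pow_le_pow_left₀ hφ.le hs1 2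
          calc 2 * φ ^ 4 * (1 + 6 * φ + 5 * φ ^ 2)
            = 2 * φ ^ 2 * φ ^ 2 * (1 + 6 * φ + 5 * φ ^ 2) := by ring
            _ ≤ _ := by gcongr <;> norm_num
      _ = s ^ 2 * (2 * φ ^ 2 * (φ + 1) ^ 2 * (1 + 18 * φ + 72 * φ ^ 2)) := by ring
      _ ≤ s ^ 2 * (2 * φ ^ 2 * (4 * φ + 1) ^ 2 * (1 + 18 * φ + 72 * φ ^ 2)) := by
          gcongr; linarith
      _ ≤ s ^ 2 * η := by gcongr
  obtain ⟨q, hq, rfl⟩ : ∃ q, 0 < q ∧ g = q ^ 4 := by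
    refine ⟨g ^ ((1 : ℝ) / 4), Real.rpow_pos_of_pos hg _, ?_⟩
    rw [← Real.rpow_natCast, ← Real.rpow_mul hg.le]; norm_num
  have e1 : √(q ^ 4) = q ^ 2 := by
    rw [show q ^ 4 = (q ^ 2) ^ 2 by ring, Real.sqrt_sq (by positivity)]
  have e2 : (q ^ 4) ^ ((1 : ℝ) / 4) = q := by
    rw [← Real.rpow_natCast, ← Real.rpow_mul hq.le]; norm_num
  rw [e1, e2]
  set c := √(2 * φ ^ 4 * (1 + 6 * φ + 5 * φ ^ 2))
  have h0 : s / (5 * q ^ 4) = √(s / (5 * q ^ 4)) ^ 2 := (Real.sq_sqrt (by positivity)).symm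
  rw [h0, ← mul_pow, mul_add, add_comm]
  have e3 : √(s / (5 * q ^ 4)) * (2 * φ / q) = √(s / (5 * q ^ 4) * (2 * φ / q) ^ 2) := by
    rw [Real.sqrt_mul (by positivity), Real.sqrt_sq (by positivity)]
  rw [e3, ← Real.sqrt_mul (by positivity)]
  refine pow_le_pow_left₀ (by positivity) (add_le_add (Real.sqrt_le_sqrt ?_)
    (Real.sqrt_le_sqrt ?_)) 2
  · have : s / (5 * q ^ 4) * (11 * φ ^ 2 / q ^ 2 + 5 * √η) =
        2.2 * (s * φ ^ 2 / (q ^ 2) ^ 3) + s * √η / q ^ 4 := by field_simp; ring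
    rw [this]
    have : 0 ≤ s * φ ^ 2 / (q ^ 2) ^ 3 := by positivity
    have : c / q ^ 4 ≤ s * √η / q ^ 4 := by gcongr
    linarith
  · have : s / (5 * q ^ 4) * (2 * φ / q) ^ 2 = 0.8 * (s * φ ^ 2 / (q ^ 2) ^ 3) := by
      field_simp; ring
    rw [this]
    have : 0 ≤ s * φ ^ 2 / (q ^ 2) ^ 3 := by positivity
    linarith

lemma kolDist_nonneg' {Ω : Type*} [MeasurableSpace Ω] (P : Measure Ω) (X : Ω → ℝ) :
    0 ≤ kolDist P X := Real.iSup_nonneg fun _ => abs_nonneg _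

lemma main_aux
    (d : ℕ) (hd : 1 ≤ d) (ρ : ℝ) (hρ : 0 < ρ) (ηlim : ℝ)
    (hη : Tendsto (fun n : ℕ => etaV d n ρ) atTop (nhds ηlim)) :
    limsup (fun n : ℕ => Real.sqrt n * kolDist (binppLaw d n) (coveredVol d n ρ)) atTop ≤
      (1 - Real.exp (-phi d ρ)) / (5 * gV d ρ) *
        (Real.sqrt (11 * phi d ρ ^ 2 / Real.sqrt (gV d ρ) + 5 * Real.sqrt ηlim)
          + 2 * phi d ρ / gV d ρ ^ ((1 : ℝ) / 4)) ^ 2 := by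
  have hφ := phi_pos d hρ
  have hg := gV_pos hd hρ
  refine le_trans ?_ (final_ineq hφ hg rfl (eta_ge hd hρ hη))
  have hv := var_tendsto hd hρ
  set v : ℕ → ℝ := fun n : ℕ => (n : ℝ) * ∫ ω, (vv (uniformBox d (sideLen d n)) (kk (sideLen d n) ρ) ω -
      (1 - (1 - phi d ρ / n) ^ n)) ^ 2
        ∂(Measure.pi fun _ : Fin n => uniformBox d (sideLen d n)) with hvd
  have hs : Tendsto (fun n : ℕ => 1 - (1 - phi d ρ / n) ^ n) atTop (𝓝 (1 - Real.exp (-phi d ρ))) := by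
    have := Real.tendsto_one_add_div_pow_exp (-phi d ρ)
    refine (this.const_sub 1).congr fun n => ?_
    rw [neg_div, ← sub_eq_add_neg]
  have hA := (hs.mul_const (phi d ρ ^ 2)).div ((hv.sqrt).pow 3) (by positivity)
  have hlim := (((hA.const_mul 0.4).sqrt).add ((hA.const_mul 2).add
    ((tendsto_const_nhds (x := √(2 * phi d ρ ^ 4 * (1 + 6 * phi d ρ + 5 * phi d ρ ^ 2)))).div hv
      hg.ne')).sqrt).pow 2
  have hle : ∀ᶠ n : ℕ in atTop, √n * kolDist (binppLaw d n) (coveredVol d n ρ) ≤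
      (√(0.4 * ((1 - (1 - phi d ρ / n) ^ n) * phi d ρ ^ 2 / √(v n) ^ 3)) +
        √(2 * ((1 - (1 - phi d ρ / n) ^ n) * phi d ρ ^ 2 / √(v n) ^ 3) +
      √(2 * phi d ρ ^ 4 * (1 + 6 * phi d ρ + 5 * phi d ρ ^ 2)) / (v n))) ^ 2 := by
    filter_upwards [exists_big hd (4 * ρ), hv.eventually (lt_mem_nhds hg)] with n hn hvn
    exact kol_bound hd hn.1 hρ hn.2 rfl hvn
  rw [← hlim.limsup_eq]
  refine limsup_le_limsup hle ?_ hlim.isBoundedUnder_le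
  exact isCoboundedUnder_le_of_le (x := 0) atTop fun n =>
    mul_nonneg (Real.sqrt_nonneg _) (kolDist_nonneg' _ _)

end

/-- (3.5) of Theorem 2.3: asymptotic upper bound on `n^{1/2} D_V`, where
`η_V(ρ) := lim_{n→∞} η_V(n,ρ)`. -/
theorem limsup_kolDist_coveredVol (d : ℕ) (hd : 1 ≤ d) (ρ : ℝ) (hρ : 0 < ρ)
    (ηlim : ℝ) (hη : Tendsto (fun n : ℕ => etaV d n ρ) atTop (nhds ηlim)) :
    limsup (fun n : ℕ => Real.sqrt n * kolDist (binppLaw d n) (coveredVol d n ρ)) atTop ≤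
      (1 - Real.exp (-phi d ρ)) / (5 * gV d ρ) *
        (Real.sqrt (11 * phi d ρ ^ 2 / Real.sqrt (gV d ρ) + 5 * Real.sqrt ηlim) +
            2 * phi d ρ / gV d ρ ^ ((1 : ℝ) / 4)) ^ 2 := by
  exact main_aux d hd ρ hρ ηlim hη

end
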